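/- The dimension of the irreducible representation of U_k indexed by a k-tuple of partitions λ⃗ = (λ^{(1)},...,λ^{(k)}) with Σ_i i·|λ^{(i)}| = k equals sp_k(λ) · f^{λ^{(1)}} · f^{λ^{(2)}} ··· f^{λ^{(k)}}, where λ = (1^{|λ^{(1)}|} 2^{|λ^{(2)}|} ... k^{|λ^{(k)}|}), sp_k(λ) is the number of set partitions of [k] of type λ, and f^μ is the number of standard Young tableaux of shape μ. -/

import Mathlib

open Sum

/-- A set partition `d` of `[k] ∪ [k̄]` (encoded as a setoid on `Fin k ⊕ Fin k`,
top row = `inl`, bottom row = `inr`) is *uniform* if every block contains as many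
top-row elements as bottom-row elements. -/
def IsUniform (k : ℕ) (d : Setoid (Fin k ⊕ Fin k)) : Prop :=
  ∀ x : Fin k ⊕ Fin k,
    {a : Fin k | d.r (.inl a) x}.ncard = {b : Fin k | d.r (.inr b) x}.ncard

/-- Embedding of a two-row diagram into the top two rows of a three-row diagram. -/
def row12 (k : ℕ) : Fin k ⊕ Fin k → Fin k ⊕ (Fin k ⊕ Fin k) :=
  Sum.elim (fun a => .inl a) (fun b => .inr (.inl b))

/-- Embedding of a two-row diagram into the bottom two rows of a three-row diagram. -/
def row23 (k : ℕ) : Fin k ⊕ Fin k → Fin k ⊕ (Fin k ⊕ Fin k) :=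
  Sum.elim (fun a => .inr (.inl a)) (fun b => .inr (.inr b))

/-- Embedding of a two-row diagram into the outer two rows of a three-row diagram. -/
def row13 (k : ℕ) : Fin k ⊕ Fin k → Fin k ⊕ (Fin k ⊕ Fin k) :=
  Sum.elim (fun a => .inl a) (fun b => .inr (.inr b))

/-- The equivalence relation on the three-row vertex set generated by transporting
`d` along the embedding `f`. -/
def liftSetoid (k : ℕ) (f : Fin k ⊕ Fin k → Fin k ⊕ (Fin k ⊕ Fin k))
    (d : Setoid (Fin k ⊕ Fin k)) : Setoid (Fin k ⊕ (Fin k ⊕ Fin k)) :=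
  Relation.EqvGen.setoid (fun x y => ∃ a b, d.r a b ∧ x = f a ∧ y = f b)

/-- The diagram product: stack `d` on top of `d'`, take connected components of the
three-row diagram, and restrict to the outer rows. -/
def ubpMul {k : ℕ} (d d' : Setoid (Fin k ⊕ Fin k)) : Setoid (Fin k ⊕ Fin k) :=
  Setoid.comap (row13 k) (liftSetoid k (row12 k) d ⊔ liftSetoid k (row23 k) d')

/-- The identity diagram `{{1,1̄},…,{k,k̄}}`. -/
def ubpOne (k : ℕ) : Setoid (Fin k ⊕ Fin k) := Setoid.ker (Sum.elim id id)

/-- The set partition of `[k]` induced on the top row. -/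
def topPart {k : ℕ} (d : Setoid (Fin k ⊕ Fin k)) : Setoid (Fin k) :=
  Setoid.comap Sum.inl d

/-- The set partition of `[k]` induced on the bottom row. -/
def botPart {k : ℕ} (d : Setoid (Fin k ⊕ Fin k)) : Setoid (Fin k) :=
  Setoid.comap Sum.inr d

/-- The idempotent diagram `e_π = {A ∪ Ā : A ∈ π}` associated to a set partition `π` of `[k]`. -/
def ePart {k : ℕ} (π : Setoid (Fin k)) : Setoid (Fin k ⊕ Fin k) :=
  Setoid.comap (Sum.elim id id) π

/-- The diagram `{{i, σ(i)‾} : i ∈ [k]}` of a permutation `σ ∈ S_k`. -/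
def permToUBP {k : ℕ} (σ : Equiv.Perm (Fin k)) : Setoid (Fin k ⊕ Fin k) :=
  Setoid.ker (Sum.elim (fun i => σ i) id)

/-- The reflection `d̃` of a diagram across a horizontal line (swap barred/unbarred). -/
def reflectUBP {k : ℕ} (d : Setoid (Fin k ⊕ Fin k)) : Setoid (Fin k ⊕ Fin k) :=
  Setoid.comap Sum.swap d

/-- The image of a set `C ⊆ [k]` of top-row elements under the block bijection of `d`:
the set of bottom-row elements connected to some element of `C`. -/
def blockMap {k : ℕ} (d : Setoid (Fin k ⊕ Fin k)) (C : Set (Fin k)) : Set (Fin k) :=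
  {j | ∃ i ∈ C, d.r (.inl i) (.inr j)}

/-- The type of uniform block permutations of `[k]`. -/
def UBPel (k : ℕ) : Type := {d : Setoid (Fin k ⊕ Fin k) // IsUniform k d}

/-- The number of standard Young tableaux of shape `μ`: semistandard tableaux with
strictly increasing rows whose entries are exactly `0, 1, …, |μ| - 1`. -/
noncomputable def sytCount (μ : YoungDiagram) : ℕ :=
  Nat.card {T : SemistandardYoungTableau μ //
    (∀ i j : ℕ, (i, j + 1) ∈ μ → T i j < T i (j + 1)) ∧
    Finset.image (fun c : ℕ × ℕ => T c.1 c.2) μ.cells = Finset.range μ.card}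

/-- The index set `I_k` of `k`-tuples `(λ^{(1)},…,λ^{(k)})` of partitions with
`∑ i, i·|λ^{(i)}| = k`; the `i`-th component (`i : Fin k`) records `λ^{(i+1)}`. -/
def UBPIndex (k : ℕ) : Type :=
  {v : Fin k → YoungDiagram // ∑ i : Fin k, ((i : ℕ) + 1) * (v i).card = k}

/-- `sp_k(λ)` for `λ = (1^{|λ^{(1)}|} 2^{|λ^{(2)}|} ⋯ k^{|λ^{(k)}|})`: the number of
set partitions of `[k]` having exactly `|λ^{(i)}|` blocks of size `i`. -/
noncomputable def spCount (k : ℕ) (v : UBPIndex k) : ℕ :=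
  Nat.card {P : Finpartition (Finset.univ : Finset (Fin k)) //
    ∀ i : Fin k, (P.parts.filter (fun b => b.card = (i : ℕ) + 1)).card = (v.1 i).card}

section MatrixColumns

variable {K A I : Type*} {n : I → Type*} [Field K] [Ring A] [Algebra K A]
  [∀ i, Fintype (n i)] [∀ i, DecidableEq (n i)] [DecidableEq I]

/-- The left ideal of those elements whose image in a product of matrix algebras is concentrated in
the `j`-th column of the `i`-th factor. -/
def columnIdeal (Φ : A ≃ₐ[K] ∀ i, Matrix (n i) (n i) K) (i : I) (j : n i) : Submodule A A where
  carrier := {a | (∀ i', i' ≠ i → Φ a i' = 0) ∧ ∀ r c, c ≠ j → Φ a i r c = 0}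
  zero_mem' := by simp
  add_mem' := by
    rintro a b ⟨h1, h2⟩ ⟨h3, h4⟩
    refine ⟨fun i' h => ?_, fun r c h => ?_⟩
    · simp [h1 i' h, h3 i' h]
    · simp [h2 r c h, h4 r c h]
  smul_mem' := by
    rintro a b ⟨h1, h2⟩
    refine ⟨fun i' h => ?_, fun r c h => ?_⟩
    · simp [h1 i' h]
    · simp [Matrix.mul_apply, h2 _ c h]

/-- The element of `A` corresponding to a matrix unit in one of the factors. -/
def matrixUnit (Φ : A ≃ₐ[K] ∀ i, Matrix (n i) (n i) K) (i : I) (r c : n i) : A :=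
  Φ.symm (Pi.single i (Matrix.single r c 1))

variable (Φ : A ≃ₐ[K] ∀ i, Matrix (n i) (n i) K)

lemma map_matrixUnit (i : I) (r c : n i) :
    Φ (matrixUnit Φ i r c) = Pi.single i (Matrix.single r c 1) := by
  simp [matrixUnit]

lemma matrixUnit_mem_columnIdeal (i : I) (r j : n i) : matrixUnit Φ i r j ∈ columnIdeal Φ i j := by
  refine ⟨fun i' h => ?_, fun r' c h => ?_⟩
  · simp [map_matrixUnit, h]
  · simp [map_matrixUnit, h.symm]

/-- A column ideal is linearly equivalent to the space of column vectors. -/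
def columnEquiv (i : I) (j : n i) :
    ↥(Submodule.restrictScalars K (columnIdeal Φ i j)) ≃ₗ[K] (n i → K) where
  toFun a r := Φ a.1 i r j
  map_add' a b := by ext; simp
  map_smul' a b := by ext; simp
  invFun v := ⟨Φ.symm (Pi.single i (Matrix.of fun r c => if c = j then v r else 0)), by
    refine ⟨fun i' h => ?_, fun r' c h => ?_⟩
    · simp [h]
    · simp [h]⟩
  left_inv := by
    rintro ⟨a, h1, h2⟩
    apply Subtype.ext
    apply Φ.injective
    ext i' r c
    simp only [AlgEquiv.apply_symm_apply]
    by_cases hi : i' = i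
    · subst hi
      by_cases hc : c = j
      · subst hc; simp
      · simp [hc, h2 r c hc]
    · simp [hi, h1 i' hi]
  right_inv v := by ext; simp

lemma finrank_columnIdeal (i : I) (j : n i) :
    Module.finrank K ↥(Submodule.restrictScalars K (columnIdeal Φ i j)) = Fintype.card (n i) := by
  rw [(columnEquiv Φ i j).finrank_eq, Module.finrank_fintype_fun_eq_card]

lemma isSimpleModule_columnIdeal (i : I) (j : n i) : IsSimpleModule A ↥(columnIdeal Φ i j) := by
  rw [isSimpleModule_iff_toSpanSingleton_surjective]
  have hne : ∀ x : columnIdeal Φ i j, x ≠ 0 → ∃ r, Φ x.1 i r j ≠ 0 := by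
    intro x hx
    by_contra! h
    exact hx ((columnEquiv Φ i j).injective (by ext r; simp [columnEquiv, h r]))
  refine ⟨⟨⟨matrixUnit Φ i j j, matrixUnit_mem_columnIdeal Φ i j j⟩, 0, fun h => ?_⟩, ?_⟩
  · have := congrArg (fun a => Φ a.1 i j j) h
    simp [map_matrixUnit] at this
  · intro x hx y
    obtain ⟨r, hr⟩ := hne x hx
    refine ⟨Φ.symm (Pi.single i (Matrix.of fun a b => if b = r then
      Φ y.1 i a j * (Φ x.1 i r j)⁻¹ else 0)), ?_⟩
    apply (columnEquiv Φ i j).injective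
    ext a
    simp [columnEquiv, Matrix.mul_apply, hr]

lemma eq_of_columnIdeal_equiv {i i' : I} {j : n i} {j' : n i'}
    (e : ↥(columnIdeal Φ i j) ≃ₗ[A] ↥(columnIdeal Φ i' j')) : i = i' := by
  by_contra hne
  let x : columnIdeal Φ i j := ⟨matrixUnit Φ i j j, matrixUnit_mem_columnIdeal Φ i j j⟩
  have hx : matrixUnit Φ i j j • x = x := by
    apply Subtype.ext
    apply Φ.injective
    simp [x, map_matrixUnit, ← Pi.single_mul]
  have h0 : e x = 0 := by
    rw [← hx, map_smul]
    apply Subtype.ext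
    apply Φ.injective
    ext k a b
    by_cases hk : k = i
    · subst hk
      simp [(e x).2.1 k hne]
    · simp [map_matrixUnit, hk]
  have hx0 : x = 0 := by simpa using h0
  have := congrArg (fun a => Φ a.1 i j j) hx0
  simp [x, map_matrixUnit] at this

lemma exists_columnIdeal_equiv [Fintype I] (j : ∀ i, n i) {S : Type*} [AddCommGroup S]
    [Module A S] [IsSimpleModule A S] : ∃ i, Nonempty (S ≃ₗ[A] ↥(columnIdeal Φ i (j i))) := by
  have := IsSimpleModule.nontrivial A S
  obtain ⟨s, hs⟩ := exists_ne (0 : S)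
  have h1 : (1 : A) = ∑ i, ∑ r, matrixUnit Φ i r r := by
    apply Φ.injective
    ext k a b
    simp only [map_one, map_sum, map_matrixUnit, Finset.sum_apply, Pi.one_apply]
    rw [Finset.sum_eq_single k]
    · simp [Matrix.one_apply, Matrix.sum_apply, Matrix.single_apply, ite_and]
    · intro i _ hi
      simp [hi.symm]
    · simp
  have h2 : ∃ i r, matrixUnit Φ i r r • s ≠ 0 := by
    by_contra! h
    apply hs
    rw [← one_smul A s, h1]
    simp [Finset.sum_smul, h]
  obtain ⟨i, r, hir⟩ := h2
  refine ⟨i, ?_⟩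
  have := isSimpleModule_columnIdeal Φ i (j i)
  let f : columnIdeal Φ i (j i) →ₗ[A] S :=
    (LinearMap.toSpanSingleton A S (matrixUnit Φ i (j i) r • s)).comp (columnIdeal Φ i (j i)).subtype
  have hf : f ≠ 0 := by
    intro h0
    apply hir
    have := congrArg (fun g => g ⟨matrixUnit Φ i r (j i), matrixUnit_mem_columnIdeal Φ i r _⟩) h0
    simp only [f, LinearMap.comp_apply, Submodule.subtype_apply, LinearMap.toSpanSingleton_apply,
      LinearMap.zero_apply, ← mul_smul] at this
    convert this using 2
    apply Φ.injective
    simp [map_matrixUnit, ← Pi.single_mul]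
  exact ⟨(LinearEquiv.ofBijective f (LinearMap.bijective_of_ne_zero hf)).symm⟩

end MatrixColumns

/-- The matrix coefficients of a family of matrix representations span all functions. -/
def CoeffsSpan (K : Type*) {M I : Type*} {n : I → Type*} [Field K] [Monoid M]
    [∀ i, Fintype (n i)] [∀ i, DecidableEq (n i)] (ρ : ∀ i, M →* Matrix (n i) (n i) K) : Prop :=
  ⊤ ≤ Submodule.span K
    (Set.range fun (x : Σ i, n i × n i) (m : M) => ρ x.1 m x.2.1 x.2.2)

section CoeffsSpan

variable {K M I : Type*} {n : I → Type*} [Field K] [Monoid M]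
  [∀ i, Fintype (n i)] [∀ i, DecidableEq (n i)]

lemma coeffsSpan_of_algEquiv [Fintype I] [DecidableEq I]
    (Φ : MonoidAlgebra K M ≃ₐ[K] ∀ i, Matrix (n i) (n i) K) :
    CoeffsSpan K fun i => ((Pi.evalMonoidHom _ i).comp
      ((Φ : MonoidAlgebra K M →* ∀ i, Matrix (n i) (n i) K).comp (MonoidAlgebra.of K M))) := by
  intro f _
  let F : MonoidAlgebra K M →ₗ[K] K := (MonoidAlgebra.basis M K).constr K f
  have hF : ∀ m, F (MonoidAlgebra.single m 1) = f m := by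
    intro m
    rw [← MonoidAlgebra.basis_apply]
    exact (MonoidAlgebra.basis M K).constr_basis K f m
  have key : f = ∑ i, ∑ r, ∑ c, F (Φ.symm (Pi.single i (Matrix.single r c 1))) •
      fun m => Φ (MonoidAlgebra.single m 1) i r c := by
    ext m
    rw [← hF m]
    conv_lhs => rw [← Φ.symm_apply_apply (MonoidAlgebra.single m 1)]
    set X := Φ (MonoidAlgebra.single m 1)
    have hX : X = ∑ i, ∑ r, ∑ c, X i r c • Pi.single i (Matrix.single r c (1 : K)) := by
      conv_lhs => rw [← Finset.univ_sum_single X]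
      refine Finset.sum_congr rfl fun i _ => ?_
      conv_lhs => rw [Matrix.matrix_eq_sum_single (X i)]
      ext k a b
      by_cases hk : k = i
      · subst hk
        simp [Matrix.sum_apply, Matrix.single_apply]
      · simp [hk]
    conv_lhs => rw [hX]
    simp [mul_comm]
    rfl
  rw [key]
  refine Submodule.sum_mem _ fun i _ => Submodule.sum_mem _ fun r _ => Submodule.sum_mem _ fun c _ =>
    Submodule.smul_mem _ _ (Submodule.subset_span ⟨⟨i, r, c⟩, ?_⟩)
  ext m
  simp

lemma exists_algEquiv_of_coeffsSpan [Fintype I] [Finite M] {ρ : ∀ i, M →* Matrix (n i) (n i) K}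
    (hρ : CoeffsSpan K ρ) (hcard : ∑ i, Fintype.card (n i) ^ 2 = Nat.card M) :
    Nonempty (MonoidAlgebra K M ≃ₐ[K] ∀ i, Matrix (n i) (n i) K) := by
  have : Fintype M := Fintype.ofFinite M
  let Ψ : MonoidAlgebra K M →ₐ[K] ∀ i, Matrix (n i) (n i) K :=
    AlgHom.pi fun i => MonoidAlgebra.lift K _ M (ρ i)
  have hΨ : ∀ a i r c, Ψ a i r c = ∑ m, a.coeff m * ρ i m r c := by
    intro a i r c
    simp only [Ψ, AlgHom.pi_apply, MonoidAlgebra.lift_apply]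
    rw [Finsupp.sum_fintype _ _ (by simp)]
    simp [Matrix.sum_apply]
  have hinj : Function.Injective Ψ := by
    rw [injective_iff_map_eq_zero]
    intro a ha
    let L : (M → K) →ₗ[K] K := ∑ m, a.coeff m • LinearMap.proj m
    have hL : L = 0 := by
      have : (⊤ : Submodule K (M → K)) ≤ LinearMap.ker L := by
        refine hρ.trans (Submodule.span_le.2 ?_)
        rintro _ ⟨x, rfl⟩
        have := hΨ a x.1 x.2.1 x.2.2
        rw [ha] at this
        simp [L, ← this]
      exact LinearMap.ker_eq_top.1 (top_le_iff.1 this)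
    classical
    ext m
    have := congrArg (fun g => g (Pi.single m 1)) hL
    simpa [L, Pi.single_apply] using this
  have hb := MonoidAlgebra.basis M K
  have : Module.Finite K (MonoidAlgebra K M) := .of_basis hb
  have hdim : Module.finrank K (MonoidAlgebra K M) =
      Module.finrank K (∀ i, Matrix (n i) (n i) K) := by
    rw [Module.finrank_eq_card_basis hb, Module.finrank_pi_fintype, ← Nat.card_eq_fintype_card,
      ← hcard]
    simp [Module.finrank_matrix, sq]
  exact ⟨AlgEquiv.ofBijective Ψ ⟨hinj,
    (LinearMap.injective_iff_surjective_of_finrank_eq_finrank (f := Ψ.toLinearMap) hdim).1 hinj⟩⟩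

end CoeffsSpan
namespace YoungDiagram

lemma fst_lt_card {μ : YoungDiagram} {i j : ℕ} (h : (i, j) ∈ μ) : i < μ.card := by
  have h1 := mem_iff_lt_colLen.1 h
  rw [colLen_eq_card] at h1
  exact h1.trans_le (Finset.card_le_card (Finset.filter_subset _ _))

lemma snd_lt_card {μ : YoungDiagram} {i j : ℕ} (h : (i, j) ∈ μ) : j < μ.card := by
  have h1 := mem_iff_lt_rowLen.1 h
  rw [rowLen_eq_card] at h1
  exact h1.trans_le (Finset.card_le_card (Finset.filter_subset _ _))

lemma finite_card_eq (n : ℕ) : {μ : YoungDiagram | μ.card = n}.Finite := by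
  refine Set.Finite.of_injOn (f := cells)
    (t := ((Finset.range n ×ˢ Finset.range n).powerset : Set (Finset (ℕ × ℕ)))) ?_
    (fun μ _ ν _ h => YoungDiagram.ext h) (Finset.finite_toSet _)
  rintro μ rfl
  simp only [Finset.coe_powerset, Set.mem_preimage, Set.mem_powerset_iff, Finset.coe_subset]
  rintro ⟨i, j⟩ h
  rw [mem_cells] at h
  simpa using ⟨fst_lt_card h, snd_lt_card h⟩

/-- The Young diagrams with `n` cells. -/
noncomputable def ofCard (n : ℕ) : Finset YoungDiagram := (finite_card_eq n).toFinset

@[simp] lemma mem_ofCard {n : ℕ} {μ : YoungDiagram} : μ ∈ ofCard n ↔ μ.card = n := by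
  simp [ofCard]

/-- `μ` is obtained from `ν` by adding one cell. -/
def Covers (ν μ : YoungDiagram) : Prop := ν ≤ μ ∧ μ.card = ν.card + 1

lemma covers_iff {ν μ : YoungDiagram} :
    Covers ν μ ↔ ∃ c ∉ ν.cells, μ.cells = insert c ν.cells := by
  constructor
  · rintro ⟨h1, h2⟩
    have h3 : (μ.cells \ ν.cells).card = 1 := by
      have := Finset.card_sdiff_add_card_eq_card (cells_subset_iff.2 h1)
      change _ = μ.card at this
      change _ + ν.card = _ at this
      omega
    obtain ⟨c, hc⟩ := Finset.card_eq_one.1 h3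
    have hc' : c ∈ μ.cells \ ν.cells := by simp [hc]
    refine ⟨c, (Finset.mem_sdiff.1 hc').2, ?_⟩
    rw [← Finset.sdiff_union_of_subset (cells_subset_iff.2 h1), hc]
    rfl
  · rintro ⟨c, hc, h⟩
    refine ⟨cells_subset_iff.1 (by simp [h]), ?_⟩
    change μ.cells.card = ν.cells.card + 1
    rw [h, Finset.card_insert_of_notMem hc]

open Classical in
/-- The diagrams obtained by adding one cell. -/
noncomputable def up (ν : YoungDiagram) : Finset YoungDiagram :=
  (ofCard (ν.card + 1)).filter (Covers ν)

open Classical in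
/-- The diagrams obtained by removing one cell. -/
noncomputable def down (μ : YoungDiagram) : Finset YoungDiagram :=
  (ofCard (μ.card - 1)).filter (Covers · μ)

@[simp] lemma mem_up {ν μ : YoungDiagram} : μ ∈ up ν ↔ Covers ν μ := by
  simp only [up, Finset.mem_filter, mem_ofCard, and_iff_right_iff_imp]
  exact fun h => h.2

@[simp] lemma mem_down {ν μ : YoungDiagram} : ν ∈ down μ ↔ Covers ν μ := by
  simp only [down, Finset.mem_filter, mem_ofCard, and_iff_right_iff_imp]
  intro h
  have := h.2
  omega

/-- The rows to which a cell can be added. -/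
def addableRows (ν : YoungDiagram) : Finset ℕ :=
  (Finset.range (ν.card + 1)).filter fun i => i = 0 ∨ ν.rowLen i < ν.rowLen (i - 1)

/-- The rows from which a cell can be removed. -/
def removableRows (ν : YoungDiagram) : Finset ℕ :=
  (Finset.range ν.card).filter fun i => ν.rowLen (i + 1) < ν.rowLen i

lemma lt_card_of_rowLen_pos {ν : YoungDiagram} {i : ℕ} (h : 0 < ν.rowLen i) : i < ν.card :=
  fst_lt_card (mem_iff_lt_rowLen.2 h)

lemma card_addableRows (ν : YoungDiagram) :
    ν.addableRows.card = ν.removableRows.card + 1 := by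
  have : ν.addableRows = insert 0 (ν.removableRows.map ⟨Nat.succ, Nat.succ_injective⟩) := by
    ext i
    rcases i with _ | i
    · simp [addableRows]
    · simp [addableRows, removableRows]
  rw [this, Finset.card_insert_of_notMem (by simp), Finset.card_map]

lemma card_up_eq (ν : YoungDiagram) : ν.up.card = ν.addableRows.card := by
  symm
  refine Finset.card_bij (fun i hi => ⟨insert (i, ν.rowLen i) ν.cells, ?_⟩) ?_ ?_ ?_
  · rintro ⟨a, b⟩ ⟨c, d⟩ hle hmem
    simp only [addableRows, Finset.mem_filter] at hi
    rw [Prod.mk_le_mk] at hle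
    simp only [Finset.coe_insert, Set.mem_insert_iff, Finset.mem_coe, mem_cells,
      Prod.mk.injEq] at hmem ⊢
    rcases hmem with ⟨rfl, rfl⟩ | hmem
    · by_cases hci : c = a
      · subst hci
        rw [mem_iff_lt_rowLen]
        omega
      · right
        rw [mem_iff_lt_rowLen]
        have := ν.rowLen_anti c (a - 1) (by omega)
        omega
    · exact Or.inr (ν.up_left_mem hle.1 hle.2 hmem)
  · intro i hi
    rw [mem_up, covers_iff]
    exact ⟨(i, ν.rowLen i), by simp [mem_iff_lt_rowLen], rfl⟩
  · intro i hi j hj h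
    have h1 : insert (i, ν.rowLen i) ν.cells = insert (j, ν.rowLen j) ν.cells :=
      congrArg cells h
    have h2 : (i, ν.rowLen i) ∈ insert (j, ν.rowLen j) ν.cells := by simp [← h1]
    simp only [Finset.mem_insert, mem_cells, mem_iff_lt_rowLen, lt_irrefl, or_false,
      Prod.mk.injEq] at h2
    exact h2.1
  · intro μ hμ
    rw [mem_up, covers_iff] at hμ
    obtain ⟨⟨i, j⟩, hc, h⟩ := hμ
    have hmem : ∀ a b, (a, b) ∈ μ ↔ (a, b) = (i, j) ∨ (a, b) ∈ ν := by
      intro a b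
      rw [← mem_cells, h]
      simp
    have hij : (i, j) ∈ μ := (hmem i j).2 (Or.inl rfl)
    rw [mem_cells, mem_iff_lt_rowLen] at hc
    have hj : j = ν.rowLen i := by
      by_contra hne
      have := (hmem i (ν.rowLen i)).1 (μ.up_left_mem le_rfl (by omega) hij)
      simp only [Prod.mk.injEq, mem_iff_lt_rowLen] at this
      omega
    subst hj
    refine ⟨i, ?_, YoungDiagram.ext h.symm⟩
    have hi : i = 0 ∨ ν.rowLen i < ν.rowLen (i - 1) := by
      by_contra! hi
      have := (hmem (i - 1) (ν.rowLen i)).1 (μ.up_left_mem (by omega) le_rfl hij)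
      simp only [Prod.mk.injEq, mem_iff_lt_rowLen] at this
      omega
    simp only [addableRows, Finset.mem_filter, Finset.mem_range]
    refine ⟨?_, hi⟩
    rcases hi with rfl | hi
    · omega
    · have := lt_card_of_rowLen_pos (ν := ν) (i := i - 1) (by omega)
      omega

lemma card_down_eq (ν : YoungDiagram) : ν.down.card = ν.removableRows.card := by
  symm
  have hmem : ∀ i ∈ ν.removableRows, (i, ν.rowLen i - 1) ∈ ν.cells := by
    intro i hi
    simp only [removableRows, Finset.mem_filter] at hi
    rw [mem_cells, mem_iff_lt_rowLen]
    omega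
  refine Finset.card_bij (fun i hi => ⟨ν.cells.erase (i, ν.rowLen i - 1), ?_⟩) ?_ ?_ ?_
  · rintro ⟨a, b⟩ ⟨c, d⟩ hle hab
    simp only [removableRows, Finset.mem_filter] at hi
    rw [Prod.mk_le_mk] at hle
    simp only [Finset.coe_erase, Set.mem_sdiff, Finset.mem_coe, mem_cells,
      Set.mem_singleton_iff, Prod.mk.injEq] at hab ⊢
    refine ⟨ν.up_left_mem hle.1 hle.2 hab.1, ?_⟩
    rintro ⟨rfl, rfl⟩
    apply hab.2
    have h1 := mem_iff_lt_rowLen.1 hab.1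
    by_cases hca : c = a
    · subst hca
      omega
    · have := ν.rowLen_anti (c + 1) a (by omega)
      omega
  · intro i hi
    rw [mem_down, covers_iff]
    exact ⟨(i, ν.rowLen i - 1), by simp, (Finset.insert_erase (hmem i hi)).symm⟩
  · intro i hi j hj h
    have h1 : ν.cells.erase (i, ν.rowLen i - 1) = ν.cells.erase (j, ν.rowLen j - 1) :=
      congrArg cells h
    have h2 : (i, ν.rowLen i - 1) ∉ ν.cells.erase (j, ν.rowLen j - 1) := by simp [← h1]
    by_contra hne
    exact h2 (Finset.mem_erase.2 ⟨by simp [hne], hmem i hi⟩)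
  · intro κ hκ
    rw [mem_down, covers_iff] at hκ
    obtain ⟨⟨i, j⟩, hc, h⟩ := hκ
    have hmem' : ∀ a b, (a, b) ∈ ν ↔ (a, b) = (i, j) ∨ (a, b) ∈ κ := by
      intro a b
      rw [← mem_cells, h]
      simp
    have hij := mem_iff_lt_rowLen.1 ((hmem' i j).2 (Or.inl rfl))
    rw [mem_cells] at hc
    have hmax : ∀ a b, i ≤ a → j ≤ b → (a, b) ∈ ν → (a, b) = (i, j) := fun a b ha hb hab =>
      ((hmem' a b).1 hab).resolve_right fun hk => hc (κ.up_left_mem ha hb hk)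
    have hj : j = ν.rowLen i - 1 := by
      by_contra hne
      have := hmax i (j + 1) le_rfl (by omega) (mem_iff_lt_rowLen.2 (by omega))
      simp at this
    have hi : ν.rowLen (i + 1) < ν.rowLen i := by
      by_contra! hle
      have := hmax (i + 1) j (by omega) le_rfl (mem_iff_lt_rowLen.2 (by omega))
      simp at this
    refine ⟨i, ?_, ?_⟩
    · simp only [removableRows, Finset.mem_filter, Finset.mem_range]
      exact ⟨lt_card_of_rowLen_pos (by omega), hi⟩
    · apply YoungDiagram.ext
      change ν.cells.erase (i, ν.rowLen i - 1) = κ.cells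
      rw [h, ← hj, Finset.erase_insert]
      simpa using hc

lemma card_up (ν : YoungDiagram) : ν.up.card = ν.down.card + 1 := by
  rw [card_up_eq, card_down_eq, card_addableRows]

lemma card_sup_add_card_inf (μ ν : YoungDiagram) :
    (μ ⊔ ν).card + (μ ⊓ ν).card = μ.card + ν.card := by
  change (μ ⊔ ν).cells.card + (μ ⊓ ν).cells.card = μ.cells.card + ν.cells.card
  rw [cells_sup, cells_inf, Finset.card_union_add_card_inter]

lemma card_lt_card {μ ν : YoungDiagram} (h : μ < ν) : μ.card < ν.card :=
  Finset.card_lt_card (cells_ssubset_iff.2 h)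

lemma eq_of_le_of_card_le {μ ν : YoungDiagram} (h : μ ≤ ν) (hc : ν.card ≤ μ.card) : μ = ν := by
  by_contra hne
  have := card_lt_card (lt_of_le_of_ne h hne)
  omega

lemma sup_eq_of_covers {κ ν μ : YoungDiagram} (h1 : Covers κ μ) (h2 : Covers ν μ) (hne : ν ≠ κ) :
    κ ⊔ ν = μ := by
  refine eq_of_le_of_card_le (sup_le h1.1 h2.1) ?_
  have h3 : κ < κ ⊔ ν := by
    refine lt_of_le_of_ne le_sup_left fun h => hne ?_
    have : ν ≤ κ := by rw [h]; exact le_sup_right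
    refine eq_of_le_of_card_le this ?_
    have := h1.2; have := h2.2; omega
  have := card_lt_card h3
  have := h1.2
  omega

lemma inf_eq_of_covers {κ ν μ : YoungDiagram} (h1 : Covers μ κ) (h2 : Covers μ ν) (hne : ν ≠ κ) :
    κ ⊓ ν = μ := by
  refine (eq_of_le_of_card_le (le_inf h1.1 h2.1) ?_).symm
  have h3 : κ ⊓ ν < κ := by
    refine lt_of_le_of_ne inf_le_left fun h => hne ?_
    have : κ ≤ ν := by rw [← h]; exact inf_le_right
    refine (eq_of_le_of_card_le this ?_).symm
    have := h1.2; have := h2.2; omega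
  have := card_lt_card h3
  have := h1.2
  omega

open Classical in
lemma sum_up_down_erase (f : YoungDiagram → ℕ) (κ : YoungDiagram) :
    ∑ μ ∈ κ.up, ∑ ν ∈ μ.down.erase κ, f ν = ∑ μ ∈ κ.down, ∑ ν ∈ μ.up.erase κ, f ν := by
  rw [Finset.sum_sigma', Finset.sum_sigma']
  refine Finset.sum_nbij' (fun x => ⟨κ ⊓ x.2, x.2⟩) (fun x => ⟨κ ⊔ x.2, x.2⟩) ?_ ?_ ?_ ?_ ?_
  · rintro ⟨μ, ν⟩ h
    simp only [Finset.mem_sigma, mem_up, Finset.mem_erase, mem_down] at h ⊢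
    obtain ⟨h1, hne, h2⟩ := h
    have h3 := card_sup_add_card_inf κ ν
    rw [sup_eq_of_covers h1 h2 hne] at h3
    have h4 := h1.2
    have h5 := h2.2
    exact ⟨⟨inf_le_left, by omega⟩, hne, inf_le_right, by omega⟩
  · rintro ⟨μ, ν⟩ h
    simp only [Finset.mem_sigma, mem_up, Finset.mem_erase, mem_down] at h ⊢
    obtain ⟨h1, hne, h2⟩ := h
    have h3 := card_sup_add_card_inf κ ν
    rw [inf_eq_of_covers h1 h2 hne] at h3
    have h4 := h1.2
    have h5 := h2.2
    exact ⟨⟨le_sup_left, by omega⟩, hne, le_sup_right, by omega⟩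
  · rintro ⟨μ, ν⟩ h
    simp only [Finset.mem_sigma, mem_up, Finset.mem_erase, mem_down] at h
    simp [sup_eq_of_covers h.1 h.2.2 h.2.1]
  · rintro ⟨μ, ν⟩ h
    simp only [Finset.mem_sigma, mem_up, Finset.mem_erase, mem_down] at h
    simp [inf_eq_of_covers h.1 h.2.2 h.2.1]
  · simp

lemma sum_up_eq {f : YoungDiagram → ℕ}
    (hf : ∀ μ : YoungDiagram, μ.card ≠ 0 → f μ = ∑ ν ∈ μ.down, f ν) (n : ℕ) :
    ∀ κ : YoungDiagram, κ.card = n → ∑ μ ∈ κ.up, f μ = (n + 1) * f κ := by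
  classical
  induction n with
  | zero =>
    intro κ hκ
    have hd : κ.down = ∅ := by
      ext ν
      simp only [mem_down, Finset.notMem_empty, iff_false]
      intro h
      have := h.2
      omega
    have h1 : ∀ μ ∈ κ.up, f μ = f κ + ∑ ν ∈ μ.down.erase κ, f ν := by
      intro μ hμ
      rw [mem_up] at hμ
      rw [hf μ (by have := hμ.2; omega), Finset.add_sum_erase _ _ (mem_down.2 hμ)]
    rw [Finset.sum_congr rfl h1, Finset.sum_add_distrib, sum_up_down_erase, hd]
    simp [card_up, hd]
  | succ n ih =>
    intro κ hκ
    have h1 : ∀ μ ∈ κ.up, f μ = f κ + ∑ ν ∈ μ.down.erase κ, f ν := by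
      intro μ hμ
      rw [mem_up] at hμ
      rw [hf μ (by have := hμ.2; omega), Finset.add_sum_erase _ _ (mem_down.2 hμ)]
    have h2 : ∀ μ ∈ κ.down, f κ + ∑ ν ∈ μ.up.erase κ, f ν = (n + 1) * f μ := by
      intro μ hμ
      rw [mem_down] at hμ
      rw [← ih μ (by have := hμ.2; omega), Finset.add_sum_erase _ _ (mem_up.2 hμ)]
    have h3 := Finset.sum_congr rfl h2
    rw [Finset.sum_add_distrib, ← Finset.mul_sum, ← hf κ (by omega)] at h3
    rw [Finset.sum_congr rfl h1, Finset.sum_add_distrib, sum_up_down_erase]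
    simp only [Finset.sum_const, smul_eq_mul, card_up] at h3 ⊢
    linarith

lemma sum_sq_eq_factorial {f : YoungDiagram → ℕ} (h0 : f ⊥ = 1)
    (hf : ∀ μ : YoungDiagram, μ.card ≠ 0 → f μ = ∑ ν ∈ μ.down, f ν) (n : ℕ) :
    ∑ μ ∈ ofCard n, f μ ^ 2 = n.factorial := by
  induction n with
  | zero =>
    have : ofCard 0 = {⊥} := by
      ext μ
      simp only [mem_ofCard, Finset.mem_singleton]
      constructor
      · intro h
        exact YoungDiagram.ext (by simpa using h)
      · rintro rfl
        rfl
    simp [this, h0]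
  | succ n ih =>
    have h1 : ∀ μ ∈ ofCard (n + 1), f μ ^ 2 = ∑ ν ∈ μ.down, f μ * f ν := by
      intro μ hμ
      rw [mem_ofCard] at hμ
      rw [← Finset.mul_sum, ← hf μ (by omega), sq]
    rw [Finset.sum_congr rfl h1, Finset.sum_comm' (s' := fun ν => ν.up) (t' := ofCard n)]
    · have h2 : ∀ ν ∈ ofCard n, ∑ μ ∈ ν.up, f μ * f ν = (n + 1) * f ν ^ 2 := by
        intro ν hν
        rw [← Finset.sum_mul, sum_up_eq hf n ν (mem_ofCard.1 hν)]
        ring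
      rw [Finset.sum_congr rfl h2, ← Finset.mul_sum, ih, Nat.factorial_succ]
    · intro μ ν
      simp only [mem_ofCard, mem_down, mem_up]
      constructor
      · rintro ⟨h, h'⟩
        exact ⟨h', by have := h'.2; omega⟩
      · rintro ⟨h, h'⟩
        exact ⟨by have := h.2; omega, h⟩

end YoungDiagram
/-- `T` is a standard Young tableau of shape `μ` with entries `0, …, |μ| - 1`, extended by zero. -/
structure IsStandard (μ : YoungDiagram) (T : ℕ → ℕ → ℕ) : Prop where
  row_lt : ∀ i j₁ j₂, j₁ < j₂ → (i, j₂) ∈ μ → T i j₁ < T i j₂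
  col_lt : ∀ i₁ i₂ j, i₁ < i₂ → (i₂, j) ∈ μ → T i₁ j < T i₂ j
  zeros : ∀ i j, (i, j) ∉ μ → T i j = 0
  image_eq : Finset.image (fun c : ℕ × ℕ => T c.1 c.2) μ.cells = Finset.range μ.card

namespace IsStandard

variable {μ : YoungDiagram} {T : ℕ → ℕ → ℕ}

lemma lt_card (hT : IsStandard μ T) {i j : ℕ} (h : (i, j) ∈ μ) : T i j < μ.card := by
  have : T i j ∈ Finset.image (fun c : ℕ × ℕ => T c.1 c.2) μ.cells :=
    Finset.mem_image.2 ⟨(i, j), h, rfl⟩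
  simpa [hT.image_eq] using this

lemma exists_of_lt_card (hT : IsStandard μ T) {x : ℕ} (hx : x < μ.card) :
    ∃ c : ℕ × ℕ, c ∈ μ ∧ T c.1 c.2 = x := by
  have : x ∈ Finset.image (fun c : ℕ × ℕ => T c.1 c.2) μ.cells := by
    simpa [hT.image_eq] using hx
  obtain ⟨c, hc, h⟩ := Finset.mem_image.1 this
  exact ⟨c, hc, h⟩

lemma injOn (hT : IsStandard μ T) :
    Set.InjOn (fun c : ℕ × ℕ => T c.1 c.2) (μ.cells : Set (ℕ × ℕ)) := by
  rw [← Finset.card_image_iff, hT.image_eq, Finset.card_range]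

lemma lt_of_le (hT : IsStandard μ T) {a b : ℕ × ℕ} (hab : a ≤ b) (hne : a ≠ b) (hb : b ∈ μ) :
    T a.1 a.2 < T b.1 b.2 := by
  obtain ⟨a1, a2⟩ := a
  obtain ⟨b1, b2⟩ := b
  rw [Prod.mk_le_mk] at hab
  rcases hab.1.eq_or_lt with rfl | h1
  · rcases hab.2.eq_or_lt with rfl | h2
    · exact absurd rfl hne
    · exact hT.row_lt _ _ _ h2 hb
  · rcases hab.2.eq_or_lt with rfl | h2
    · exact hT.col_lt _ _ _ h1 hb
    · exact (hT.row_lt _ _ _ h2 (μ.up_left_mem h1.le le_rfl hb)).trans (hT.col_lt _ _ _ h1 hb)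

end IsStandard

lemma sytCount_eq (μ : YoungDiagram) :
    sytCount μ = Nat.card {T : ℕ → ℕ → ℕ // IsStandard μ T} := by
  refine Nat.card_congr
    { toFun := fun T => ⟨fun i j => T.1 i j, ⟨?_, fun i₁ i₂ j h h' => T.1.col_strict h h',
        fun i j h => T.1.zeros h, T.2.2⟩⟩
      invFun := fun T => ⟨⟨T.1, fun h h' => (T.2.row_lt _ _ _ h h').le,
        fun h h' => T.2.col_lt _ _ _ h h', fun h => T.2.zeros _ _ h⟩,
        fun i j h => T.2.row_lt _ _ _ j.lt_succ_self h, T.2.image_eq⟩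
      left_inv := fun T => rfl
      right_inv := fun T => rfl }
  intro i j₁ j₂ h
  induction j₂, h using Nat.le_induction with
  | base => exact fun h => T.2.1 _ _ h
  | succ j _ ih =>
    intro h
    exact (ih (μ.up_left_mem le_rfl (Nat.le_succ j) h)).trans (T.2.1 _ _ h)

instance finite_isStandard (μ : YoungDiagram) : Finite {T : ℕ → ℕ → ℕ // IsStandard μ T} := by
  refine Finite.of_injective (β := μ.cells → Fin μ.card)
    (fun T c => ⟨T.1 c.1.1 c.1.2, T.2.lt_card c.2⟩) ?_
  intro T T' h
  apply Subtype.ext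
  ext i j
  by_cases hm : (i, j) ∈ μ
  · have := congrArg Fin.val (congrFun h ⟨(i, j), hm⟩)
    exact this
  · rw [T.2.zeros _ _ hm, T'.2.zeros _ _ hm]

lemma sytCount_bot : sytCount ⊥ = 1 := by
  rw [sytCount_eq, Nat.card_eq_one_iff_unique]
  refine ⟨⟨fun T T' => Subtype.ext ?_⟩, ⟨⟨fun _ _ => 0, ?_⟩⟩⟩
  · ext i j
    rw [T.2.zeros _ _ (YoungDiagram.notMem_bot _), T'.2.zeros _ _ (YoungDiagram.notMem_bot _)]
  · exact ⟨fun _ _ _ _ h => absurd h (YoungDiagram.notMem_bot _),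
      fun _ _ _ _ h => absurd h (YoungDiagram.notMem_bot _), fun _ _ _ => rfl, rfl⟩

open Classical in
/-- Extend a filling of `ν` to the larger diagram `μ` by entries `|ν|`. -/
noncomputable def extendFilling (ν μ : YoungDiagram) (T : ℕ → ℕ → ℕ) (i j : ℕ) : ℕ :=
  if (i, j) ∈ μ ∧ (i, j) ∉ ν then ν.card else T i j

open YoungDiagram in
lemma isStandard_extendFilling {ν μ : YoungDiagram} (h : Covers ν μ) {T : ℕ → ℕ → ℕ}
    (hT : IsStandard ν T) : IsStandard μ (extendFilling ν μ T) := by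
  obtain ⟨c, hc, hcells⟩ := covers_iff.1 h
  have hmem : ∀ a, a ∈ μ ↔ a = c ∨ a ∈ ν := by
    intro a
    rw [← mem_cells, hcells]
    simp
  rw [mem_cells] at hc
  have hval : ∀ i j, (i, j) ∈ ν → extendFilling ν μ T i j = T i j := by
    intro i j h
    simp [extendFilling, h]
  have hvalc : extendFilling ν μ T c.1 c.2 = ν.card := by
    simp [extendFilling, hc, hmem]
  have hmono : ∀ a b : ℕ × ℕ, a ≤ b → a ≠ b → b ∈ μ →
      extendFilling ν μ T a.1 a.2 < extendFilling ν μ T b.1 b.2 := by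
    intro a b hab hne hb
    have ha : a ∈ μ := μ.up_left_mem hab.1 hab.2 hb
    by_cases hbν : b ∈ ν
    · rw [hval _ _ hbν, hval _ _ (ν.up_left_mem hab.1 hab.2 hbν)]
      exact hT.lt_of_le hab hne hbν
    · have hbc := ((hmem b).1 hb).resolve_right hbν
      have haν := ((hmem a).1 ha).resolve_left fun h => hne (h.trans hbc.symm)
      rw [hval _ _ haν, hbc, hvalc]
      exact hT.lt_card haν
  refine ⟨fun i j₁ j₂ h h' => hmono (i, j₁) (i, j₂) (by simp [h.le]) (by simp [h.ne]) h',
    fun i₁ i₂ j h h' => hmono (i₁, j) (i₂, j) (by simp [h.le]) (by simp [h.ne]) h', ?_, ?_⟩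
  · intro i j hij
    have : (i, j) ∉ ν := fun h' => hij ((hmem _).2 (Or.inr h'))
    simp [extendFilling, hij, hT.zeros _ _ this]
  · rw [hcells, Finset.image_insert, hvalc, h.2, Finset.range_add_one, ← hT.image_eq]
    congr 1
    refine Finset.image_congr fun a ha => hval _ _ ha

open YoungDiagram in
lemma sytCount_eq_sum_down (μ : YoungDiagram) (hμ : μ.card ≠ 0) :
    sytCount μ = ∑ ν ∈ μ.down, sytCount ν := by
  simp only [sytCount_eq]
  rw [← Finset.sum_coe_sort, ← Nat.card_sigma]
  symm
  refine Nat.card_congr (Equiv.ofBijective (fun x => ⟨extendFilling x.1.1 μ x.2.1,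
    isStandard_extendFilling (mem_down.1 x.1.2) x.2.2⟩) ⟨?_, ?_⟩)
  · rintro ⟨⟨ν, hν⟩, ⟨T, hT⟩⟩ ⟨⟨ν', hν'⟩, ⟨T', hT'⟩⟩ h
    have h := congrArg Subtype.val h
    simp only at h
    rw [mem_down] at hν hν'
    have key : ∀ {ν : YoungDiagram} {T}, Covers ν μ → IsStandard ν T → ∀ i j,
        (i, j) ∈ ν ↔ (i, j) ∈ μ ∧ extendFilling ν μ T i j < μ.card - 1 := by
      intro ν T hν hT i j
      have hc : μ.card - 1 = ν.card := by have := hν.2; omega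
      rw [hc]
      constructor
      · intro hij
        refine ⟨hν.1 hij, ?_⟩
        simpa [extendFilling, hij] using hT.lt_card hij
      · rintro ⟨h1, h2⟩
        by_contra h3
        simp [extendFilling, h1, h3] at h2
    obtain rfl : ν = ν' := by
      ext ⟨i, j⟩
      change (i, j) ∈ ν ↔ (i, j) ∈ ν'
      rw [key hν hT, key hν' hT', h]
    obtain rfl : T = T' := by
      ext i j
      by_cases hij : (i, j) ∈ ν
      · have := congrFun (congrFun h i) j
        simpa [extendFilling, hij] using this
      · rw [hT.zeros _ _ hij, hT'.zeros _ _ hij]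
    rfl
  · rintro ⟨T, hT⟩
    obtain ⟨c, hc, hcT⟩ := hT.exists_of_lt_card (x := μ.card - 1) (by omega)
    let ν : YoungDiagram := ⟨μ.cells.erase c, by
      intro a b hba ha
      simp only [Finset.coe_erase, Set.mem_sdiff, Finset.mem_coe, mem_cells,
        Set.mem_singleton_iff] at ha ⊢
      refine ⟨μ.up_left_mem hba.1 hba.2 ha.1, ?_⟩
      rintro rfl
      have h1 := hT.lt_of_le hba (Ne.symm ha.2) ha.1
      have h2 := hT.lt_card (i := a.1) (j := a.2) ha.1
      omega⟩
    have hν : Covers ν μ := covers_iff.2 ⟨c, by simp [ν], (Finset.insert_erase hc).symm⟩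
    have hmem : ∀ a, a ∈ ν ↔ a ∈ μ ∧ a ≠ c := by
      intro a
      change a ∈ μ.cells.erase c ↔ _
      rw [Finset.mem_erase, mem_cells, and_comm]
    have hcard : ν.card = μ.card - 1 := by have := hν.2; omega
    let T' : ℕ → ℕ → ℕ := fun i j => if (i, j) ∈ ν then T i j else 0
    have hval : ∀ a : ℕ × ℕ, a ∈ ν → T' a.1 a.2 = T a.1 a.2 := by
      intro a ha
      simp [T', ha]
    have hT' : IsStandard ν T' := by
      refine ⟨fun i j₁ j₂ h h' => ?_, fun i₁ i₂ j h h' => ?_, fun i j h => by simp [T', h], ?_⟩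
      · rw [hval (i, j₂) h', hval (i, j₁) (ν.up_left_mem le_rfl h.le h')]
        exact hT.row_lt _ _ _ h ((hmem _).1 h').1
      · rw [hval (i₂, j) h', hval (i₁, j) (ν.up_left_mem h.le le_rfl h')]
        exact hT.col_lt _ _ _ h ((hmem _).1 h').1
      · rw [Finset.image_congr (g := fun c : ℕ × ℕ => T c.1 c.2) (fun a ha => hval a ha)]
        have h1 := hT.image_eq
        have h2 : μ.cells = insert c ν.cells := (Finset.insert_erase hc).symm
        rw [h2, Finset.image_insert, hcT, ← hcard, hν.2, Finset.range_add_one] at h1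
        have h3 : ν.card ∉ Finset.image (fun c : ℕ × ℕ => T c.1 c.2) ν.cells := by
          intro h
          obtain ⟨a, ha, hac⟩ := Finset.mem_image.1 h
          have ha' := (hmem a).1 ha
          refine ha'.2 (hT.injOn ha'.1 hc ?_)
          change T a.1 a.2 = T c.1 c.2
          rw [hcT, ← hcard, ← hac]
        rw [← Finset.erase_insert h3, h1, Finset.erase_insert (by simp)]
    refine ⟨⟨⟨ν, mem_down.2 hν⟩, ⟨T', hT'⟩⟩, Subtype.ext ?_⟩
    ext i j
    simp only [extendFilling, T']
    by_cases hij : (i, j) ∈ μ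
    · by_cases hijν : (i, j) ∈ ν
      · simp [hijν]
      · have : (i, j) = c := by
          by_contra hne
          exact hijν ((hmem _).2 ⟨hij, hne⟩)
        subst this
        simp [hij, hijν, hcard, ← hcT]
    · have : (i, j) ∉ ν := fun h => hij ((hmem _).1 h).1
      simp [hij, this, hT.zeros _ _ hij]

lemma sum_sytCount_sq (n : ℕ) : ∑ μ ∈ YoungDiagram.ofCard n, sytCount μ ^ 2 = n.factorial :=
  YoungDiagram.sum_sq_eq_factorial sytCount_bot sytCount_eq_sum_down n
/-- `x ↦ (R x, C x)` is a bijection from `Fin n` to the cells of `μ`: the functions `R` and `C` give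
the row and the column of each entry of a tableau of shape `μ`. -/
structure IsTableau {n : ℕ} (μ : YoungDiagram) (R C : Fin n → ℕ) : Prop where
  inj : ∀ x y, R x = R y → C x = C y → x = y
  mem : ∀ x, (R x, C x) ∈ μ
  surj : ∀ i j, (i, j) ∈ μ → ∃ x, R x = i ∧ C x = j

/-- The number of positions at which the word `r` has a letter less than `i`. -/
def countBelow {n : ℕ} (r : Fin n → ℕ) (i : ℕ) : ℕ :=
  (Finset.univ.filter fun x => r x < i).card

lemma countBelow_comp {n : ℕ} (r : Fin n → ℕ) (g : Equiv.Perm (Fin n)) (i : ℕ) :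
    countBelow (r ∘ g) i = countBelow r i :=
  Finset.card_bij (fun x _ => g x) (by simp) (by simp)
    (fun y hy => ⟨g.symm y, by simpa using hy, by simp⟩)

lemma countBelow_eq_sum {n : ℕ} (C r : Fin n → ℕ) (i : ℕ) :
    countBelow r i = ∑ j ∈ Finset.univ.image C,
      (Finset.univ.filter fun x => C x = j ∧ r x < i).card := by
  rw [countBelow, Finset.card_eq_sum_card_fiberwise (f := C) (t := Finset.univ.image C)
    (fun x _ => by simp)]
  simp only [Finset.filter_filter, and_comm]

lemma exists_isTableau {n : ℕ} {μ : YoungDiagram} (h : μ.card = n) :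
    ∃ R C : Fin n → ℕ, IsTableau μ R C := by
  let e : Fin n ≃ μ.cells := (Finset.equivFinOfCardEq h).symm
  refine ⟨fun x => (e x).1.1, fun x => (e x).1.2, ⟨?_, fun x => (e x).2, ?_⟩⟩
  · intro x y h1 h2
    exact e.injective (Subtype.ext (Prod.ext h1 h2))
  · intro i j hij
    exact ⟨e.symm ⟨(i, j), hij⟩, by simp, by simp⟩

namespace IsTableau

variable {n : ℕ} {μ ν : YoungDiagram} {R C : Fin n → ℕ}

lemma card_col_below (h : IsTableau μ R C) (i j : ℕ) :
    (Finset.univ.filter fun x => C x = j ∧ R x < i).card = min i (μ.colLen j) := by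
  rw [← Finset.card_range (min i (μ.colLen j))]
  refine Finset.card_bij (fun x _ => R x) ?_ ?_ ?_
  · intro x hx
    simp only [Finset.mem_filter, Finset.mem_univ, true_and, Finset.mem_range, lt_min_iff] at hx ⊢
    refine ⟨hx.2, ?_⟩
    rw [← YoungDiagram.mem_iff_lt_colLen, ← hx.1]
    exact h.mem x
  · intro x hx y hy hxy
    simp only [Finset.mem_filter, Finset.mem_univ, true_and] at hx hy
    exact h.inj x y hxy (hx.1.trans hy.1.symm)
  · intro a ha
    simp only [Finset.mem_range, lt_min_iff, ← YoungDiagram.mem_iff_lt_colLen] at ha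
    obtain ⟨x, hx, hxj⟩ := h.surj _ _ ha.2
    exact ⟨x, by simpa [hx, hxj] using ha.1, hx⟩

lemma card_col (h : IsTableau μ R C) (j : ℕ) :
    (Finset.univ.filter fun x => C x = j).card = μ.colLen j := by
  rw [← min_self (μ.colLen j), ← h.card_col_below]
  congr 1
  ext x
  simp only [Finset.mem_filter, Finset.mem_univ, true_and, iff_self_and]
  rintro rfl
  exact YoungDiagram.mem_iff_lt_colLen.1 (h.mem x)

lemma card_col_below_le (h : IsTableau μ R C) {r : Fin n → ℕ}
    (hr : ∀ x y, r x = r y → C x = C y → x = y) (i j : ℕ) :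
    (Finset.univ.filter fun x => C x = j ∧ r x < i).card ≤
      (Finset.univ.filter fun x => C x = j ∧ R x < i).card := by
  rw [h.card_col_below, le_min_iff]
  constructor
  · conv_rhs => rw [← Finset.card_range i]
    refine Finset.card_le_card_of_injOn r ?_ ?_
    · intro x hx
      simp at hx
      simp [hx]
    · intro x hx y hy hxy
      simp at hx hy
      exact hr x y hxy (hx.1.trans hy.1.symm)
  · rw [← h.card_col]
    exact Finset.card_le_card fun x hx => by
      simp only [Finset.mem_filter, Finset.mem_univ, true_and] at hx ⊢
      exact hx.1

lemma countBelow_le (h : IsTableau μ R C) {r : Fin n → ℕ}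
    (hr : ∀ x y, r x = r y → C x = C y → x = y) (i : ℕ) : countBelow r i ≤ countBelow R i := by
  rw [countBelow_eq_sum C, countBelow_eq_sum C]
  exact Finset.sum_le_sum fun j _ => h.card_col_below_le hr i j

lemma exists_perm (h : IsTableau μ R C) {r c : Fin n → ℕ}
    (hr : ∀ x y, r x = r y → c x = c y → x = y) (hmem : ∀ x, (r x, c x) ∈ μ) :
    ∃ g : Equiv.Perm (Fin n), R ∘ g = r ∧ C ∘ g = c := by
  choose g hg1 hg2 using fun x => h.surj _ _ (hmem x)
  have hinj : Function.Injective g := by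
    intro x y hxy
    exact hr x y (by rw [← hg1, ← hg1, hxy]) (by rw [← hg2, ← hg2, hxy])
  exact ⟨Equiv.ofBijective g (Finite.injective_iff_bijective.1 hinj), funext hg1, funext hg2⟩

lemma exists_perm_of_countBelow (h : IsTableau μ R C) {r : Fin n → ℕ}
    (hr : ∀ x y, r x = r y → C x = C y → x = y) (hc : ∀ i, countBelow r i = countBelow R i) :
    ∃ g : Equiv.Perm (Fin n), R ∘ g = r ∧ C ∘ g = C := by
  refine h.exists_perm hr fun x => ?_
  rw [YoungDiagram.mem_iff_lt_colLen]
  have h1 := hc (μ.colLen (C x))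
  rw [countBelow_eq_sum C, countBelow_eq_sum C,
    Finset.sum_eq_sum_iff_of_le fun j _ => h.card_col_below_le hr _ j] at h1
  have h2 := h1 (C x) (by simp)
  rw [h.card_col_below, min_self, ← h.card_col] at h2
  have h3 := Finset.eq_of_subset_of_card_le (t := Finset.univ.filter fun y => C y = C x)
    (s := Finset.univ.filter fun y => C y = C x ∧ r y < (Finset.univ.filter fun y => C y = C x).card)
    (fun y hy => by
      simp only [Finset.mem_filter, Finset.mem_univ, true_and] at hy ⊢
      exact hy.1) h2.ge
  have h4 : x ∈ Finset.univ.filter fun y => C y = C x := by simp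
  rw [← h3] at h4
  rw [← h.card_col]
  exact (Finset.mem_filter.1 h4).2.2

lemma countBelow_succ (h : IsTableau μ R C) (i : ℕ) :
    countBelow R (i + 1) = countBelow R i + μ.rowLen i := by
  have h1 : (Finset.univ.filter fun x => R x = i).card = μ.rowLen i := by
    rw [← Finset.card_range (μ.rowLen i)]
    refine Finset.card_bij (fun x _ => C x) ?_ ?_ ?_
    · intro x hx
      simp only [Finset.mem_filter, Finset.mem_univ, true_and, Finset.mem_range] at hx ⊢
      rw [← YoungDiagram.mem_iff_lt_rowLen, ← hx]
      exact h.mem x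
    · intro x hx y hy hxy
      simp only [Finset.mem_filter, Finset.mem_univ, true_and] at hx hy
      exact h.inj x y (hx.trans hy.symm) hxy
    · intro a ha
      simp only [Finset.mem_range, ← YoungDiagram.mem_iff_lt_rowLen] at ha
      obtain ⟨x, hx, hxj⟩ := h.surj _ _ ha
      exact ⟨x, by simpa using hx, hxj⟩
  rw [← h1, countBelow, countBelow, ← Finset.card_union_of_disjoint]
  · congr 1
    ext x
    simp only [Finset.mem_filter, Finset.mem_univ, true_and, Finset.mem_union]
    omega
  · rw [Finset.disjoint_filter]
    intros
    omega

lemma eq_of_countBelow {R' C' : Fin n → ℕ} (h : IsTableau μ R C) (h' : IsTableau ν R' C')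
    (hc : ∀ i, countBelow R i = countBelow R' i) : μ = ν := by
  ext ⟨i, j⟩
  have h1 := h.countBelow_succ i
  have h2 := h'.countBelow_succ i
  have h3 := hc i
  have h4 := hc (i + 1)
  have : μ.rowLen i = ν.rowLen i := by omega
  rw [YoungDiagram.mem_cells, YoungDiagram.mem_cells, YoungDiagram.mem_iff_lt_rowLen,
    YoungDiagram.mem_iff_lt_rowLen, this]

end IsTableau

namespace IsStandard

variable {n : ℕ} {μ : YoungDiagram} {T : ℕ → ℕ → ℕ}

lemma exists_isTableau (hT : IsStandard μ T) (hn : μ.card = n) :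
    ∃ RC : (Fin n → ℕ) × (Fin n → ℕ), IsTableau μ RC.1 RC.2 ∧ ∀ x, T (RC.1 x) (RC.2 x) = x := by
  choose c hc hcT using fun x : Fin n => hT.exists_of_lt_card (x := x) (by omega)
  refine ⟨⟨fun x => (c x).1, fun x => (c x).2⟩, ⟨fun x y h1 h2 => ?_, hc, fun i j hij => ?_⟩, hcT⟩
  · exact Fin.ext ((hcT x).symm.trans ((congrArg₂ T h1 h2).trans (hcT y)))
  · refine ⟨⟨T i j, hn ▸ hT.lt_card hij⟩, ?_⟩
    have := hT.injOn (hc ⟨T i j, hn ▸ hT.lt_card hij⟩) hij (hcT _)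
    simp [this]

/-- The row and column functions of a standard tableau. -/
noncomputable def rowCol (hT : IsStandard μ T) (hn : μ.card = n) :
    (Fin n → ℕ) × (Fin n → ℕ) := (hT.exists_isTableau hn).choose

lemma isTableau_rowCol (hT : IsStandard μ T) (hn : μ.card = n) :
    IsTableau μ (hT.rowCol hn).1 (hT.rowCol hn).2 := (hT.exists_isTableau hn).choose_spec.1

lemma apply_rowCol (hT : IsStandard μ T) (hn : μ.card = n) (x : Fin n) :
    T ((hT.rowCol hn).1 x) ((hT.rowCol hn).2 x) = x := (hT.exists_isTableau hn).choose_spec.2 x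

lemma rowCol_snd_eq (hT : IsStandard μ T) (hn : μ.card = n) (x : Fin n) :
    (hT.rowCol hn).2 x =
      (Finset.univ.filter fun y => y < x ∧ (hT.rowCol hn).1 y = (hT.rowCol hn).1 x).card := by
  have h := hT.isTableau_rowCol hn
  have hap := hT.apply_rowCol hn
  set R := (hT.rowCol hn).1
  set C := (hT.rowCol hn).2
  conv_lhs => rw [← Finset.card_range (C x)]
  symm
  refine Finset.card_bij (fun y _ => C y) ?_ ?_ ?_
  · intro y hy
    simp only [Finset.mem_filter, Finset.mem_univ, true_and, Finset.mem_range] at hy ⊢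
    by_contra! hle
    rcases hle.eq_or_lt with heq | hlt
    · exact hy.1.ne (h.inj _ _ hy.2 heq.symm)
    · have h1 := hT.row_lt (R y) (C x) (C y) hlt (h.mem y)
      rw [hap, hy.2, hap] at h1
      exact absurd hy.1 (not_lt.2 (Fin.le_def.2 h1.le))
  · intro y hy z hz hyz
    simp only [Finset.mem_filter, Finset.mem_univ, true_and] at hy hz
    exact h.inj y z (hy.2.trans hz.2.symm) hyz
  · intro a ha
    rw [Finset.mem_range] at ha
    obtain ⟨y, hy1, hy2⟩ := h.surj (R x) a (μ.up_left_mem le_rfl ha.le (h.mem x))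
    refine ⟨y, ?_, hy2⟩
    simp only [Finset.mem_filter, Finset.mem_univ, true_and]
    refine ⟨?_, hy1⟩
    have h1 := hT.row_lt (R x) a (C x) ha (h.mem x)
    rw [hap, ← hy1, ← hy2, hap] at h1
    exact h1

lemma eq_of_rowCol_fst_eq {T' : ℕ → ℕ → ℕ} (hT : IsStandard μ T) (hT' : IsStandard μ T')
    (hn : μ.card = n) (h : (hT.rowCol hn).1 = (hT'.rowCol hn).1) : T = T' := by
  have h2 : (hT.rowCol hn).2 = (hT'.rowCol hn).2 := by
    ext x
    rw [rowCol_snd_eq, rowCol_snd_eq, h]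
  ext i j
  by_cases hij : (i, j) ∈ μ
  · obtain ⟨x, rfl, rfl⟩ := (hT.isTableau_rowCol hn).surj i j hij
    rw [hT.apply_rowCol, h, h2, hT'.apply_rowCol]
  · rw [hT.zeros _ _ hij, hT'.zeros _ _ hij]

lemma toLex_le (hT : IsStandard μ T) (hn : μ.card = n) {g : Equiv.Perm (Fin n)}
    (hg : (hT.rowCol hn).2 ∘ g = (hT.rowCol hn).2) :
    toLex (hT.rowCol hn).1 ≤ toLex ((hT.rowCol hn).1 ∘ g) := by
  have h := hT.isTableau_rowCol hn
  have hap := hT.apply_rowCol hn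
  set R := (hT.rowCol hn).1
  set C := (hT.rowCol hn).2
  by_contra! hlt
  obtain ⟨x, hx1, hx2⟩ := hlt
  simp only [Pi.toLex_apply, Function.comp_apply] at hx1 hx2
  have hC : C (g x) = C x := congrFun hg x
  have h1 := hT.col_lt (R (g x)) (R x) (C x) hx2 (h.mem x)
  rw [hap] at h1
  rw [← hC, hap] at h1
  have h2 : g (g x) = g x := h.inj _ _ (hx1 (g x) h1) (congrFun hg (g x))
  rw [g.injective h2] at h1
  exact lt_irrefl _ h1

end IsStandard
section Simple

/-- If `κ` acts on `A ∙ e` with image in the line of `e`, and `e` is an eigenvector of `κ` for a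
nonzero eigenvalue, then `A ∙ e` is simple. -/
lemma isSimpleModule_span_singleton {K A V : Type*} [Field K] [Ring A] [Algebra K A]
    [IsSemisimpleRing A] [AddCommGroup V] [Module A V] {κ : A} {e : V} {c : K} (hc : c ≠ 0)
    (he : e ≠ 0) (hκ : κ • e = algebraMap K A c • e)
    (hline : ∀ a : A, ∃ z : K, κ • a • e = algebraMap K A z • e) :
    IsSimpleModule A ↥(Submodule.span A {e}) := by
  have hinv : ∀ (z : K), z ≠ 0 → ∀ v : V, algebraMap K A z⁻¹ • algebraMap K A z • v = v := by
    intro z hz v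
    rw [smul_smul, ← map_mul, inv_mul_cancel₀ hz, map_one, one_smul]
  set S := Submodule.span A {e}
  have heS : e ∈ S := Submodule.mem_span_singleton_self e
  let e' : S := ⟨e, heS⟩
  have htop : ∀ U : Submodule A S, e' ∈ U → U = ⊤ := by
    refine fun U hU => eq_top_iff.2 fun ⟨x, hx⟩ _ => ?_
    obtain ⟨a, rfl⟩ := Submodule.mem_span_singleton.1 hx
    exact U.smul_mem a hU
  have hκU : ∀ U : Submodule A S, U ≠ ⊤ → ∀ u ∈ U, κ • u = 0 := by
    rintro U hU ⟨u, hu⟩ huU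
    obtain ⟨a, rfl⟩ := Submodule.mem_span_singleton.1 hu
    obtain ⟨z, hz⟩ := hline a
    by_cases hz0 : z = 0
    · ext
      simpa [hz0] using hz
    · refine absurd (htop U ?_) hU
      have : e' = algebraMap K A z⁻¹ • κ • (⟨a • e, hu⟩ : S) := by
        ext
        simp only [Submodule.coe_smul, hz]
        exact (hinv z hz0 e).symm
      rw [this]
      exact U.smul_mem _ (U.smul_mem _ huU)
  have hne : κ • e' ≠ 0 := by
    intro h
    have h1 : κ • e = 0 := congrArg Subtype.val h
    rw [hκ] at h1
    apply he
    rw [← hinv c hc e, h1, smul_zero]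
  have hnt : Nontrivial S := ⟨e', 0, fun h => hne (by rw [h, smul_zero])⟩
  refine isSimpleModule_iff .. |>.2 ?_
  refine { eq_bot_or_eq_top := fun U => ?_ }
  obtain ⟨U', hU'⟩ := exists_isCompl U
  by_cases hU : U = ⊤
  · exact Or.inr hU
  by_cases hU2 : U' = ⊤
  · exact Or.inl (by simpa [hU2] using hU'.inf_eq_bot)
  exfalso
  obtain ⟨u, hu, u', hu', h⟩ := Submodule.mem_sup.1
    (show e' ∈ U ⊔ U' by rw [hU'.sup_eq_top]; trivial)
  apply hne
  rw [← h, smul_add, hκU U hU u hu, hκU U' hU2 u' hu', add_zero]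

end Simple

section Specht

open Equiv

/-- The permutation representation of the symmetric group on words of length `n`. -/
noncomputable def wordRep (n : ℕ) : Representation ℂ (Perm (Fin n)) ((Fin n → ℕ) → ℂ) where
  toFun g := LinearMap.funLeft ℂ ℂ fun r => r ∘ g
  map_one' := rfl
  map_mul' _ _ := rfl

variable {n : ℕ}

/-- The basis vector of the word `r`. -/
noncomputable def word (r : Fin n → ℕ) : (wordRep n).asModule :=
  (wordRep n).asModuleEquiv.symm (Pi.single r 1)

lemma single_inv_smul_word (g : Perm (Fin n)) (t : ℂ) (r : Fin n → ℕ) :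
    MonoidAlgebra.single g⁻¹ t • word r = t • word (r ∘ g) := by
  rw [Representation.single_smul]
  congr 1
  apply (wordRep n).asModuleEquiv.injective
  ext r'
  simp only [word, LinearEquiv.apply_symm_apply]
  change (Pi.single r 1 : (Fin n → ℕ) → ℂ) (r' ∘ (g⁻¹ : Perm (Fin n))) =
    (Pi.single (r ∘ g) 1 : (Fin n → ℕ) → ℂ) r'
  simp only [Pi.single_apply]
  congr 1
  rw [Perm.inv_def, Equiv.comp_symm_eq]

/-- The permutations preserving the columns of a tableau. -/
def colStab (C : Fin n → ℕ) : Finset (Perm (Fin n)) := Finset.univ.filter fun g => C ∘ g = C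

lemma mem_colStab {C : Fin n → ℕ} {g : Perm (Fin n)} : g ∈ colStab C ↔ C ∘ g = C := by
  simp [colStab]

/-- The sign of a permutation as a complex number. -/
def csign (g : Perm (Fin n)) : ℂ := ((Perm.sign g : ℤ) : ℂ)

lemma csign_mul (g h : Perm (Fin n)) : csign (g * h) = csign g * csign h := by
  simp [csign]

lemma csign_mul_self (g : Perm (Fin n)) : csign g * csign g = 1 := by
  rw [csign, ← Int.cast_mul, ← Units.val_mul, Int.units_mul_self]
  simp

lemma csign_inv (g : Perm (Fin n)) : csign g⁻¹ = csign g := by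
  simp [csign]

/-- The column antisymmetrizer. -/
noncomputable def colAntisymm (C : Fin n → ℕ) : MonoidAlgebra ℂ (Perm (Fin n)) :=
  ∑ g ∈ colStab C, MonoidAlgebra.single g⁻¹ (csign g)

/-- The polytabloid of a tableau. -/
noncomputable def polytabloid (R C : Fin n → ℕ) : (wordRep n).asModule :=
  ∑ g ∈ colStab C, csign g • word (R ∘ g)

lemma colAntisymm_smul_word (C r : Fin n → ℕ) : colAntisymm C • word r = polytabloid r C := by
  simp only [colAntisymm, polytabloid, Finset.sum_smul, single_inv_smul_word]

lemma polytabloid_comp_of_mem {C : Fin n → ℕ} (r : Fin n → ℕ) {h : Perm (Fin n)}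
    (hh : C ∘ h = C) : polytabloid (r ∘ h) C = csign h • polytabloid r C := by
  rw [polytabloid, polytabloid, Finset.smul_sum]
  refine Finset.sum_bij (fun g _ => h * g) ?_ ?_ ?_ ?_
  · intro g hg
    rw [mem_colStab] at hg ⊢
    rw [Perm.coe_mul, ← Function.comp_assoc, hh, hg]
  · intro a _ b _ hab
    exact mul_left_cancel hab
  · intro b hb
    refine ⟨h⁻¹ * b, ?_, by simp⟩
    rw [mem_colStab] at hb ⊢
    rw [Perm.coe_mul, ← Function.comp_assoc, Perm.inv_def, (Equiv.comp_symm_eq h C C).2 hh.symm, hb]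
  · intro g _
    rw [smul_smul, csign_mul, ← mul_assoc, csign_mul_self, one_mul]
    rfl

lemma polytabloid_eq_zero {r C : Fin n → ℕ} {x y : Fin n} (hr : r x = r y) (hC : C x = C y)
    (hxy : x ≠ y) : polytabloid r C = 0 := by
  have key : ∀ f : Fin n → ℕ, f x = f y → f ∘ swap x y = f := by
    intro f hf
    ext z
    simp only [Function.comp_apply, swap_apply_def]
    split_ifs with h1 h2
    · rw [h1, hf]
    · rw [h2, hf]
    · rfl
  have h := polytabloid_comp_of_mem r (key C hC)
  rw [key r hr, csign, Perm.sign_swap hxy] at h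
  simp only [Units.val_neg, Units.val_one, Int.cast_neg, Int.cast_one, neg_smul, one_smul] at h
  have h2 : (2 : ℂ) • polytabloid r C = 0 := by
    rw [two_smul]
    nth_rewrite 1 [h]
    exact neg_add_cancel _
  exact (smul_eq_zero.1 h2).resolve_left two_ne_zero

lemma colAntisymm_smul_polytabloid (R C : Fin n → ℕ) :
    colAntisymm C • polytabloid R C = ((colStab C).card : ℂ) • polytabloid R C := by
  conv_lhs => rw [polytabloid, Finset.smul_sum]
  rw [Finset.sum_congr rfl (g := fun _ => polytabloid R C), Finset.sum_const, Nat.cast_smul_eq_nsmul]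
  intro g hg
  rw [smul_comm, colAntisymm_smul_word, polytabloid_comp_of_mem _ (mem_colStab.1 hg), smul_smul,
    csign_mul_self, one_smul]

lemma polytabloid_comp (R C : Fin n → ℕ) (h : Perm (Fin n)) :
    polytabloid (R ∘ h) (C ∘ h) = MonoidAlgebra.single h⁻¹ (1 : ℂ) • polytabloid R C := by
  simp only [polytabloid, Finset.smul_sum]
  refine Finset.sum_bij (fun g _ => h * g * h⁻¹) ?_ ?_ ?_ ?_
  · intro g hg
    rw [mem_colStab] at hg ⊢
    rw [Perm.coe_mul, Perm.coe_mul, Perm.inv_def, ← Function.comp_assoc, Equiv.comp_symm_eq,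
      ← Function.comp_assoc, hg]
  · intro a _ b _ hab
    simpa using hab
  · intro b hb
    refine ⟨h⁻¹ * b * h, ?_, by group⟩
    rw [mem_colStab] at hb ⊢
    ext x
    have := congrFun hb (h x)
    simpa using this
  · intro g _
    rw [smul_comm, single_inv_smul_word, one_smul]
    congr 1
    · rw [csign_mul, csign_mul, csign_inv, mul_right_comm, csign_mul_self, one_mul]
    · congr 1
      ext x
      simp

lemma polytabloid_apply (R C r : Fin n → ℕ) : (wordRep n).asModuleEquiv (polytabloid R C) r =
    ∑ g ∈ colStab C, if r = R ∘ g then csign g else 0 := by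
  simp only [polytabloid, word, map_sum, map_smul, LinearEquiv.apply_symm_apply,
    Finset.sum_apply, Pi.smul_apply, Pi.single_apply, smul_eq_mul, mul_ite, mul_one, mul_zero]

namespace IsTableau

variable {μ ν : YoungDiagram} {R C R' C' : Fin n → ℕ}

lemma polytabloid_apply_self (h : IsTableau μ R C) :
    (wordRep n).asModuleEquiv (polytabloid R C) R = 1 := by
  rw [polytabloid_apply, Finset.sum_eq_single_of_mem 1 (by simp [mem_colStab])]
  · simp [csign]
  · intro g hg hne
    rw [if_neg]
    intro hR
    refine hne (Equiv.ext fun x => (h.inj _ _ (congrFun hR x) ?_).symm)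
    exact (congrFun (mem_colStab.1 hg) x).symm

lemma polytabloid_ne_zero (h : IsTableau μ R C) : polytabloid R C ≠ 0 := by
  intro h0
  simpa [h0] using h.polytabloid_apply_self

lemma exists_colAntisymm_smul (h : IsTableau μ R C) (a : MonoidAlgebra ℂ (Perm (Fin n))) :
    ∃ z : ℂ, colAntisymm C • a • word R = z • polytabloid R C := by
  induction a using MonoidAlgebra.induction_linear with
  | zero => exact ⟨0, by simp⟩
  | add a b ha hb =>
    obtain ⟨z, hz⟩ := ha
    obtain ⟨w, hw⟩ := hb
    exact ⟨z + w, by rw [add_smul, smul_add, hz, hw, add_smul]⟩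
  | single g t =>
    obtain ⟨g, rfl⟩ := inv_surjective g
    rw [single_inv_smul_word, smul_comm, colAntisymm_smul_word]
    by_cases hr : ∀ x y, (R ∘ g) x = (R ∘ g) y → C x = C y → x = y
    · obtain ⟨f, hf, hfC⟩ := h.exists_perm_of_countBelow hr (countBelow_comp R g)
      rw [← hf, polytabloid_comp_of_mem _ hfC, smul_smul]
      exact ⟨_, rfl⟩
    · push Not at hr
      obtain ⟨x, y, h1, h2, h3⟩ := hr
      exact ⟨0, by rw [polytabloid_eq_zero h1 h2 h3, smul_zero, zero_smul]⟩

lemma isSimpleModule (h : IsTableau μ R C) :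
    IsSimpleModule (MonoidAlgebra ℂ (Perm (Fin n)))
      ↥(Submodule.span (MonoidAlgebra ℂ (Perm (Fin n))) {polytabloid R C}) := by
  have hpos : 0 < (colStab C).card := Finset.card_pos.2 ⟨1, by simp [mem_colStab]⟩
  refine isSimpleModule_span_singleton (K := ℂ) (κ := colAntisymm C) (c := (colStab C).card)
    (by exact_mod_cast hpos.ne') h.polytabloid_ne_zero ?_ fun a => ?_
  · rw [colAntisymm_smul_polytabloid, algebraMap_smul]
  · obtain ⟨z, hz⟩ := h.exists_colAntisymm_smul (a * colAntisymm C)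
    refine ⟨z, ?_⟩
    rw [algebraMap_smul, ← hz, ← colAntisymm_smul_word, smul_smul a]

lemma countBelow_le_of_smul_ne_zero (h : IsTableau μ R C) (r : Fin n → ℕ)
    {a : MonoidAlgebra ℂ (Perm (Fin n))}
    (ha : colAntisymm C • a • word r ≠ 0) (i : ℕ) : countBelow r i ≤ countBelow R i := by
  contrapose! ha
  induction a using MonoidAlgebra.induction_linear with
  | zero => simp
  | add a b ha hb => rw [add_smul, smul_add, ha, hb, add_zero]
  | single g t =>
    obtain ⟨g, rfl⟩ := inv_surjective g
    rw [single_inv_smul_word, smul_comm, colAntisymm_smul_word]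
    by_cases hr : ∀ x y, (r ∘ g) x = (r ∘ g) y → C x = C y → x = y
    · have := h.countBelow_le hr i
      rw [countBelow_comp] at this
      omega
    · push Not at hr
      obtain ⟨x, y, h1, h2, h3⟩ := hr
      rw [polytabloid_eq_zero h1 h2 h3, smul_zero]

lemma countBelow_le_of_equiv (h : IsTableau μ R C)
    (φ : ↥(Submodule.span (MonoidAlgebra ℂ (Perm (Fin n))) {polytabloid R C})
      ≃ₗ[MonoidAlgebra ℂ (Perm (Fin n))]
        ↥(Submodule.span (MonoidAlgebra ℂ (Perm (Fin n))) {polytabloid R' C'})) (i : ℕ) :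
    countBelow R' i ≤ countBelow R i := by
  set A := MonoidAlgebra ℂ (Perm (Fin n))
  let e : ↥(Submodule.span A {polytabloid R C}) :=
    ⟨polytabloid R C, Submodule.mem_span_singleton_self _⟩
  have hpos : 0 < (colStab C).card := Finset.card_pos.2 ⟨1, by simp [mem_colStab]⟩
  have he : colAntisymm C • e ≠ 0 := by
    intro h0
    have h1 : colAntisymm C • polytabloid R C = 0 := congrArg Subtype.val h0
    rw [colAntisymm_smul_polytabloid, smul_eq_zero] at h1
    rcases h1 with h1 | h1
    · exact hpos.ne' (by exact_mod_cast h1)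
    · exact h.polytabloid_ne_zero h1
  obtain ⟨b, hb⟩ := Submodule.mem_span_singleton.1 (φ e).2
  refine h.countBelow_le_of_smul_ne_zero R' (a := b * colAntisymm C') (fun h0 => he ?_) i
  apply φ.injective
  rw [map_smul, map_zero]
  ext1
  rw [Submodule.coe_smul, ← hb, ← colAntisymm_smul_word, smul_smul b, h0]
  rfl

lemma eq_of_equiv (h : IsTableau μ R C) (h' : IsTableau ν R' C')
    (φ : ↥(Submodule.span (MonoidAlgebra ℂ (Perm (Fin n))) {polytabloid R C})
      ≃ₗ[MonoidAlgebra ℂ (Perm (Fin n))]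
        ↥(Submodule.span (MonoidAlgebra ℂ (Perm (Fin n))) {polytabloid R' C'})) : μ = ν :=
  h.eq_of_countBelow h' fun i =>
    le_antisymm (h'.countBelow_le_of_equiv φ.symm i) (h.countBelow_le_of_equiv φ i)

end IsTableau

lemma IsStandard.linearIndependent {μ : YoungDiagram} (hn : μ.card = n) :
    LinearIndependent ℂ fun T : {T // IsStandard μ T} =>
      polytabloid (T.2.rowCol hn).1 (T.2.rowCol hn).2 := by
  rw [linearIndependent_iff']
  intro s c hsum T hT
  by_contra hcT
  obtain ⟨T, hT, hmin⟩ := Finset.exists_min_image (s.filter fun T => c T ≠ 0)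
    (fun T => toLex (T.2.rowCol hn).1) ⟨T, by simp [hT, hcT]⟩
  rw [Finset.mem_filter] at hT
  have h1 := congrFun (congrArg (wordRep n).asModuleEquiv hsum) (T.2.rowCol hn).1
  rw [map_sum, map_zero, Finset.sum_apply, Finset.sum_eq_single_of_mem T hT.1] at h1
  · rw [map_smul, Pi.smul_apply, (T.2.isTableau_rowCol hn).polytabloid_apply_self] at h1
    exact hT.2 (by simpa using h1)
  · intro T' hT' hne
    by_cases hc : c T' = 0
    · simp [hc]
    rw [map_smul, Pi.smul_apply, polytabloid_apply, Finset.sum_eq_zero, smul_zero]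
    intro g hg
    rw [if_neg]
    intro hR
    have h2 := T'.2.toLex_le hn (mem_colStab.1 hg)
    rw [← hR] at h2
    have h3 := hmin T' (by simp [hT', hc])
    exact hne (Subtype.ext (T'.2.eq_of_rowCol_fst_eq T.2 hn (toLex.injective (le_antisymm h2 h3))))

end Specht
section SymmetricGroup

open Equiv

instance finite_youngDiagram_card (n : ℕ) : Finite {μ : YoungDiagram // μ.card = n} :=
  Finite.of_equiv _ (Equiv.subtypeEquivRight fun μ => YoungDiagram.mem_ofCard (n := n) (μ := μ))

lemma sum_card_sytCount_sq (n : ℕ) [Fintype {μ : YoungDiagram // μ.card = n}] :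
    ∑ μ : {μ : YoungDiagram // μ.card = n}, sytCount μ ^ 2 = n.factorial := by
  rw [← sum_sytCount_sq]
  exact (Finset.sum_subtype _ (fun μ => YoungDiagram.mem_ofCard) fun μ => sytCount μ ^ 2).symm

lemma card_le_finrank_of_mem {K A V W ι : Type*} [Field K] [Ring A] [Algebra K A] [AddCommGroup V]
    [Module A V] [Module K V] [IsScalarTower K A V] [AddCommGroup W] [Module A W] [Module K W]
    [IsScalarTower K A W] {S : Submodule A V} {J : Submodule A W}
    [FiniteDimensional K ↥(J.restrictScalars K)] (e : ↥S ≃ₗ[A] ↥J) [Finite ι] {v : ι → V}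
    (hv : LinearIndependent K v) (hmem : ∀ x, v x ∈ S) :
    Nat.card ι ≤ Module.finrank K ↥(J.restrictScalars K) := by
  let f : ↥(S.restrictScalars K) →ₗ[K] ↥(J.restrictScalars K) :=
    { toFun := fun x => e x
      map_add' := fun x y => e.map_add x y
      map_smul' := fun z x => e.toLinearMap.map_smul_of_tower z x }
  have hf : LinearMap.ker f = ⊥ := LinearMap.ker_eq_bot_of_injective (f := f) e.injective
  have hli : LinearIndependent K fun x => (⟨v x, hmem x⟩ : ↥(S.restrictScalars K)) :=
    LinearIndependent.of_comp (Submodule.subtype _) hv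
  have : Fintype ι := Fintype.ofFinite _
  rw [Nat.card_eq_fintype_card]
  exact (hli.map' f hf).fintype_card_le_finrank

lemma IsTableau.sytCount_le_finrank {n : ℕ} {μ : YoungDiagram} {R C : Fin n → ℕ}
    (h : IsTableau μ R C) (hn : μ.card = n) {J : Submodule (MonoidAlgebra ℂ (Perm (Fin n)))
      (MonoidAlgebra ℂ (Perm (Fin n)))} [FiniteDimensional ℂ ↥(J.restrictScalars ℂ)]
    (e : ↥(Submodule.span (MonoidAlgebra ℂ (Perm (Fin n))) {polytabloid R C})
      ≃ₗ[MonoidAlgebra ℂ (Perm (Fin n))] ↥J) :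
    sytCount μ ≤ Module.finrank ℂ ↥(J.restrictScalars ℂ) := by
  have hmem : ∀ T : {T // IsStandard μ T}, polytabloid (T.2.rowCol hn).1 (T.2.rowCol hn).2 ∈
      Submodule.span (MonoidAlgebra ℂ (Perm (Fin n))) {polytabloid R C} := by
    intro T
    obtain ⟨g, h1, h2⟩ := h.exists_perm (T.2.isTableau_rowCol hn).inj (T.2.isTableau_rowCol hn).mem
    rw [← h1, ← h2, polytabloid_comp]
    exact Submodule.smul_mem _ _ (Submodule.mem_span_singleton_self _)
  rw [sytCount_eq]
  exact card_le_finrank_of_mem e (IsStandard.linearIndependent hn) hmem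

open Classical in
theorem exists_coeffsSpan_perm (n : ℕ) :
    (∀ μ : YoungDiagram, μ.card = n → 0 < sytCount μ) ∧
    ∃ ρ : ∀ μ : {μ : YoungDiagram // μ.card = n},
      Perm (Fin n) →* Matrix (Fin (sytCount μ)) (Fin (sytCount μ)) ℂ, CoeffsSpan ℂ ρ := by
  set A := MonoidAlgebra ℂ (Perm (Fin n))
  have : Fintype {μ : YoungDiagram // μ.card = n} := Fintype.ofFinite _
  obtain ⟨m, d, hd, ⟨Φ⟩⟩ := IsSemisimpleRing.exists_algEquiv_pi_matrix_of_isAlgClosed ℂ A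
  choose R C hRC using fun μ : {μ : YoungDiagram // μ.card = n} => exists_isTableau μ.2
  have hsimple := fun μ => (hRC μ).isSimpleModule
  let j : ∀ i, Fin (d i) := fun i => ⟨0, Nat.pos_of_ne_zero (hd i).out⟩
  choose i hi using fun μ => exists_columnIdeal_equiv Φ j
    (S := ↥(Submodule.span A {polytabloid (R μ) (C μ)}))
  have hinj : Function.Injective i := by
    intro μ ν h
    obtain ⟨e⟩ := hi μ
    obtain ⟨e'⟩ := hi ν
    rw [← h] at e'
    exact Subtype.ext ((hRC μ).eq_of_equiv (hRC ν) (e.trans e'.symm))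
  have hle : ∀ μ : {μ : YoungDiagram // μ.card = n}, sytCount μ ≤ d (i μ) := by
    intro μ
    obtain ⟨e⟩ := hi μ
    have hfin : Module.finrank ℂ ↥((columnIdeal Φ (i μ) (j (i μ))).restrictScalars ℂ) = d (i μ) := by
      rw [finrank_columnIdeal, Fintype.card_fin]
    have hfd : FiniteDimensional ℂ ↥((columnIdeal Φ (i μ) (j (i μ))).restrictScalars ℂ) :=
      FiniteDimensional.of_finrank_pos (by rw [hfin]; exact Nat.pos_of_ne_zero (hd _).out)
    exact ((hRC μ).sytCount_le_finrank μ.2 e).trans_eq hfin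
  have hsum : ∑ i, d i ^ 2 = n.factorial := by
    have h1 := Φ.toLinearEquiv.finrank_eq
    rw [Module.finrank_pi_fintype] at h1
    simp only [Module.finrank_matrix, Fintype.card_fin, Module.finrank_self, mul_one, ← sq] at h1
    rw [← h1, Module.finrank_eq_card_basis (MonoidAlgebra.basis (Perm (Fin n)) ℂ)]
    simp [Fintype.card_perm]
  have hs1 : ∑ μ : {μ : YoungDiagram // μ.card = n}, sytCount μ ^ 2 ≤ ∑ μ, d (i μ) ^ 2 :=
    Finset.sum_le_sum fun μ _ => Nat.pow_le_pow_left (hle μ) 2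
  have hs2 : ∑ μ, d (i μ) ^ 2 = ∑ x ∈ Finset.univ.image i, d x ^ 2 :=
    by
    rw [Finset.sum_image fun x _ y _ h => hinj h]
  have hs3 : ∑ x ∈ Finset.univ.image i, d x ^ 2 ≤ ∑ x, d x ^ 2 :=
    Finset.sum_le_sum_of_subset (Finset.subset_univ _)
  have hs4 := sum_card_sytCount_sq n
  have hsurj : Function.Surjective i := by
    intro x
    by_contra hx
    have : ∑ x ∈ Finset.univ.image i, d x ^ 2 < ∑ x, d x ^ 2 :=
      Finset.sum_lt_sum_of_subset (Finset.subset_univ _) (Finset.mem_univ x)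
        (by simpa using hx) (Nat.pos_of_ne_zero (pow_ne_zero _ (hd x).out)) (by simp)
    omega
  have heq : ∀ μ : {μ : YoungDiagram // μ.card = n}, sytCount μ = d (i μ) := by
    have h1 := (Finset.sum_eq_sum_iff_of_le (s := Finset.univ)
      fun (μ : {μ : YoungDiagram // μ.card = n}) _ => Nat.pow_le_pow_left (hle μ) 2).1 (by omega)
    exact fun μ => Nat.pow_left_injective two_ne_zero (h1 μ (Finset.mem_univ _))
  refine ⟨fun μ hμ => heq ⟨μ, hμ⟩ ▸ Nat.pos_of_ne_zero (hd _).out, ?_⟩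
  let e := fun μ : {μ : YoungDiagram // μ.card = n} => finCongr (heq μ)
  obtain ⟨ρ, hρ⟩ : ∃ ρ : ∀ x, Perm (Fin n) →* Matrix (Fin (d x)) (Fin (d x)) ℂ, CoeffsSpan ℂ ρ :=
    ⟨_, coeffsSpan_of_algEquiv Φ⟩
  refine ⟨fun μ => ((Matrix.reindexAlgEquiv ℂ ℂ (e μ).symm).toMonoidHom).comp (ρ (i μ)),
    hρ.trans (Submodule.span_mono ?_)⟩
  rintro _ ⟨⟨x, r, c⟩, rfl⟩
  obtain ⟨μ, rfl⟩ := hsurj x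
  exact ⟨⟨μ, (e μ).symm r, (e μ).symm c⟩, by ext g; simp⟩

end SymmetricGroup
section ProductRep

variable {K ι : Type*} [Field K] [Fintype ι] [DecidableEq ι] {G : ι → Type*} [∀ i, Monoid (G i)]

/-- The external tensor product of matrix representations of the factors of a product monoid. -/
def piRep {t : ι → Type*} [∀ i, Fintype (t i)] [∀ i, DecidableEq (t i)]
    (ρ : ∀ i, G i →* Matrix (t i) (t i) K) :
    (∀ i, G i) →* Matrix (∀ i, t i) (∀ i, t i) K where
  toFun g := Matrix.of fun r c => ∏ i, ρ i (g i) (r i) (c i)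
  map_one' := by
    ext r c
    simp only [Pi.one_apply, map_one, Matrix.of_apply, Matrix.one_apply]
    rw [Finset.prod_ite_zero]
    simp [funext_iff]
  map_mul' g h := by
    ext r c
    simp only [Pi.mul_apply, map_mul, Matrix.of_apply, Matrix.mul_apply, Finset.prod_univ_sum,
      Fintype.piFinset_univ, Finset.prod_mul_distrib]

lemma coeffsSpan_piRep [∀ i, Finite (G i)] {J : ι → Type*} [∀ i, Finite (J i)]
    {t : ∀ i, J i → Type*} [∀ i j, Fintype (t i j)] [∀ i j, DecidableEq (t i j)]
    {ρ : ∀ i j, G i →* Matrix (t i j) (t i j) K} (h : ∀ i, CoeffsSpan K (ρ i)) :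
    CoeffsSpan K fun w : ∀ i, J i => piRep fun i => ρ i (w i) := by
  classical
  have (i : ι) : Fintype (J i) := Fintype.ofFinite _
  have (i : ι) : Fintype (G i) := Fintype.ofFinite _
  have hδ : ∀ i (x : G i), ∃ c : (Σ j, t i j × t i j) → K, ∀ g : G i,
      (Pi.single x 1 : G i → K) g = ∑ z, c z * ρ i z.1 g z.2.1 z.2.2 := by
    intro i x
    have h1 : (Pi.single x 1 : G i → K) ∈ _ := h i trivial
    rw [Submodule.mem_span_range_iff_exists_fun] at h1
    obtain ⟨c, hc⟩ := h1
    refine ⟨c, fun g => ?_⟩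
    rw [← hc]
    simp
  choose c hc using hδ
  intro f _
  have key : f = ∑ x, ∑ z : ∀ i, Σ j, t i j × t i j, (f x * ∏ i, c i (x i) (z i)) •
      fun g => piRep (fun i => ρ i (z i).1) g (fun i => (z i).2.1) (fun i => (z i).2.2) := by
    ext g
    have h2 : ∀ x, ∑ z : ∀ i, Σ j, t i j × t i j, (f x * ∏ i, c i (x i) (z i)) *
        ∏ i, ρ i (z i).1 (g i) (z i).2.1 (z i).2.2 = if x = g then f x else 0 := by
      intro x
      simp only [mul_assoc, ← Finset.mul_sum, ← Finset.prod_mul_distrib]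
      have := (Finset.prod_univ_sum (fun i => (Finset.univ : Finset (Σ j, t i j × t i j)))
        (fun i z => c i (x i) z * ρ i z.1 (g i) z.2.1 z.2.2)).symm
      rw [Fintype.piFinset_univ] at this
      rw [this]
      simp only [← hc, Pi.single_apply]
      rw [Finset.prod_ite_zero]
      simp [funext_iff, eq_comm]
    simp only [Finset.sum_apply, Pi.smul_apply, smul_eq_mul, piRep, MonoidHom.coe_mk,
      OneHom.coe_mk, Matrix.of_apply, h2]
    simp
  rw [key]
  exact Submodule.sum_mem _ fun x _ => Submodule.sum_mem _ fun z _ => Submodule.smul_mem _ _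
    (Submodule.subset_span ⟨⟨fun i => (z i).1, fun i => (z i).2.1, fun i => (z i).2.2⟩, rfl⟩)

end ProductRep

section MonomialRep

variable {K M P G : Type*} [Field K] [Monoid M] [Group G]

/-- `B` describes, for each element of the monoid `M`, a matrix with rows and columns indexed by `P`
and entries in the group `G` with a zero adjoined, having at most one nonzero entry in each
column; these matrices are multiplicative. -/
structure IsMonomial (B : M → P → G → P → Prop) : Prop where
  unique : ∀ {d p q g q' g'}, B d q g p → B d q' g' p → q = q' ∧ g = g'
  one : ∀ {p q g}, B 1 q g p ↔ q = p ∧ g = 1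
  mul : ∀ {d d' p q g}, B (d * d') q g p ↔ ∃ r h h', B d q h r ∧ B d' r h' p ∧ g = h * h'

open Classical in
/-- The representation of `M` induced from a representation of `G` along a monomial
representation. -/
noncomputable def monomialRep [Fintype P] [Fintype G] {t : Type*} [Fintype t] [DecidableEq t]
    {B : M → P → G → P → Prop} (hB : IsMonomial B) (σ : G →* Matrix t t K) :
    M →* Matrix (P × t) (P × t) K where
  toFun d := Matrix.of fun x y => ∑ g, if B d x.1 g y.1 then σ g x.2 y.2 else 0
  map_one' := by
    ext ⟨q, r⟩ ⟨p, c⟩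
    simp only [hB.one, Matrix.of_apply, Matrix.one_apply, Prod.mk.injEq]
    rw [Finset.sum_eq_single 1 (by intro b _ hb; simp [hb]) (by simp)]
    by_cases h : q = p <;> simp [h, Matrix.one_apply]
  map_mul' d d' := by
    ext ⟨q, r⟩ ⟨p, c⟩
    simp only [Matrix.of_apply, Matrix.mul_apply, Fintype.sum_prod_type, Finset.sum_mul_sum]
    by_cases h : ∃ s h', B d' s h' p
    · obtain ⟨s, h', hs⟩ := h
      by_cases h2 : ∃ h, B d q h s
      · obtain ⟨h, hh⟩ := h2
        rw [Finset.sum_eq_single (h * h')]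
        rotate_left
        · intro g _ hg
          rw [if_neg]
          intro hg'
          obtain ⟨s', a, b, h3, h4, rfl⟩ := hB.mul.1 hg'
          obtain ⟨rfl, rfl⟩ := hB.unique hs h4
          obtain ⟨-, rfl⟩ := hB.unique hh h3
          exact hg rfl
        · simp
        rw [if_pos (hB.mul.2 ⟨s, h, h', hh, hs, rfl⟩), map_mul, Matrix.mul_apply,
          Finset.sum_eq_single s]
        rotate_left
        · intro s' _ hs'
          refine Finset.sum_eq_zero fun u _ => Finset.sum_eq_zero fun a _ =>
            Finset.sum_eq_zero fun b _ => ?_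
          rw [if_neg (fun hb : B d' s' b p => hs' (hB.unique hb hs).1), mul_zero]
        · simp
        refine Finset.sum_congr rfl fun u _ => ?_
        rw [Finset.sum_eq_single h, Finset.sum_eq_single h', if_pos hh, if_pos hs]
        · intro b _ hb
          rw [if_neg (fun hb' : B d' s b p => hb (hB.unique hb' hs).2), mul_zero]
        · simp
        · intro a _ ha
          refine Finset.sum_eq_zero fun b _ => ?_
          rw [if_neg (fun ha' : B d q a s => ha (hB.unique ha' hh).2), zero_mul]
        · simp
      · rw [Finset.sum_eq_zero, Finset.sum_eq_zero]
        · intro s' _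
          refine Finset.sum_eq_zero fun u _ => Finset.sum_eq_zero fun a _ =>
            Finset.sum_eq_zero fun b _ => ?_
          by_cases hb : B d' s' b p
          · obtain ⟨rfl, rfl⟩ := hB.unique hb hs
            rw [if_neg fun ha => h2 ⟨a, ha⟩, zero_mul]
          · rw [if_neg hb, mul_zero]
        · intro g _
          rw [if_neg]
          intro hg'
          obtain ⟨s', a, b, h3, h4, rfl⟩ := hB.mul.1 hg'
          obtain ⟨rfl, rfl⟩ := hB.unique hs h4
          exact h2 ⟨a, h3⟩
    · rw [Finset.sum_eq_zero, Finset.sum_eq_zero]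
      · intro s' _
        refine Finset.sum_eq_zero fun u _ => Finset.sum_eq_zero fun a _ =>
          Finset.sum_eq_zero fun b _ => ?_
        rw [if_neg fun hb => h ⟨s', b, hb⟩, mul_zero]
      · intro g _
        rw [if_neg]
        intro hg'
        obtain ⟨s', a, b, h3, h4, rfl⟩ := hB.mul.1 hg'
        exact h ⟨s', b, h4⟩

open Classical in
lemma coeffsSpan_monomialRep {α : Type*} {P G : α → Type*} [∀ a, Fintype (P a)]
    [∀ a, Group (G a)] [∀ a, Fintype (G a)] {B : ∀ a, M → P a → G a → P a → Prop}
    (hB : ∀ a, IsMonomial (B a))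
    (hspan : ⊤ ≤ Submodule.span K (Set.range fun (x : Σ a, P a × G a × P a) (d : M) =>
      if B x.1 d x.2.1 x.2.2.1 x.2.2.2 then (1 : K) else 0))
    {J : α → Type*} {t : ∀ a, J a → Type*} [∀ a j, Fintype (t a j)] [∀ a j, DecidableEq (t a j)]
    {σ : ∀ a j, G a →* Matrix (t a j) (t a j) K} (hσ : ∀ a, CoeffsSpan K (σ a)) :
    CoeffsSpan K fun x : Σ a, J a => monomialRep (hB x.1) (σ x.1 x.2) := by
  refine hspan.trans (Submodule.span_le.2 ?_)
  rintro _ ⟨⟨a, q, g, p⟩, rfl⟩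
  let F : (G a → K) →ₗ[K] (M → K) :=
    { toFun := fun φ d => ∑ h, if B a d q h p then φ h else 0
      map_add' := fun φ ψ => by
        ext d
        simp only [Pi.add_apply, ← Finset.sum_add_distrib]
        exact Finset.sum_congr rfl fun h _ => by split_ifs <;> simp
      map_smul' := fun c φ => by
        ext d
        simp [Finset.mul_sum] }
  have h1 : F (Pi.single g 1) ∈ (Submodule.span K _).map F :=
    Submodule.mem_map_of_mem (hσ a (x := Pi.single g 1) trivial)
  rw [Submodule.map_span] at h1
  have h2 : F (Pi.single g 1) = fun d => if B a d q g p then 1 else 0 := by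
    ext d
    change (∑ h, if B a d q h p then (Pi.single g 1 : G a → K) h else 0) = _
    rw [Finset.sum_eq_single g]
    · simp
    · intro h _ hne
      simp [hne]
    · simp
  rw [h2] at h1
  refine Submodule.span_mono ?_ h1
  rintro _ ⟨_, ⟨⟨j, r, c⟩, rfl⟩, rfl⟩
  exact ⟨⟨⟨a, j⟩, (q, r), (p, c)⟩, rfl⟩

end MonomialRep
section Labelling

variable {k : ℕ} {a b : Fin k → ℕ}

/-- `p` labels the elements of a set partition of `[k]` by its blocks, where for each `i` there are
`a i` blocks of size `i + 1`. -/
def IsLabelling (a : Fin k → ℕ) (p : Fin k → Σ i, Fin (a i)) : Prop :=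
  ∀ l, (Finset.univ.filter fun x => p x = l).card = l.1 + 1

namespace IsLabelling

variable {p q : Fin k → Σ i, Fin (a i)}

lemma exists_eq (hp : IsLabelling a p) (l : Σ i, Fin (a i)) : ∃ x, p x = l := by
  have h : 0 < (Finset.univ.filter fun x => p x = l).card := by rw [hp]; omega
  obtain ⟨x, hx⟩ := Finset.card_pos.1 h
  exact ⟨x, by simpa using hx⟩

lemma sum_eq (hp : IsLabelling a p) : ∑ i : Fin k, ((i : ℕ) + 1) * a i = k := by
  conv_rhs => rw [← Fintype.card_fin k, ← Finset.card_univ,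
    Finset.card_eq_sum_card_fiberwise (f := p) (t := Finset.univ) (by simp)]
  rw [Finset.sum_congr rfl fun l _ => hp l, Fintype.sum_sigma]
  simp [mul_comm]

lemma card_fst_eq (hp : IsLabelling a p) (i : Fin k) :
    (Finset.univ.filter fun x => (p x).1 = i).card = (i + 1) * a i := by
  rw [Finset.card_eq_sum_card_fiberwise (f := p)
    (t := Finset.univ.map (Function.Embedding.sigmaMk i))]
  · rw [Finset.sum_map, Finset.sum_congr rfl (g := fun _ => (i : ℕ) + 1)]
    · simp [mul_comm]
    · intro l _
      rw [Finset.filter_filter, ← hp ⟨i, l⟩]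
      congr 1
      ext x
      simp only [Function.Embedding.sigmaMk_apply, Finset.mem_filter, Finset.mem_univ, true_and,
        and_iff_right_iff_imp]
      rintro h
      rw [h]
  · intro x hx
    simp only [Finset.coe_filter, Finset.mem_univ, true_and, Set.mem_ofPred_eq] at hx
    subst hx
    simp

lemma card_fiber_eq_iff (hp : IsLabelling a p) (x i : Fin k) :
    (Finset.univ.filter fun y => p y = p x).card = i + 1 ↔ (p x).1 = i := by
  rw [hp, add_left_inj, Fin.ext_iff]

lemma type_eq {q : Fin k → Σ i, Fin (b i)} (hp : IsLabelling a p) (hq : IsLabelling b q)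
    (h : Setoid.ker p = Setoid.ker q) : a = b := by
  ext i
  have h1 : ∀ x y, p y = p x ↔ q y = q x := fun x y => by
    rw [← Setoid.ker_def, ← Setoid.ker_def, h]
  have h2 : (i + 1 : ℕ) * a i = (i + 1) * b i := by
    rw [← hp.card_fst_eq, ← hq.card_fst_eq]
    congr 1
    ext x
    simp only [Finset.mem_filter, Finset.mem_univ, true_and]
    rw [← hp.card_fiber_eq_iff, ← hq.card_fiber_eq_iff]
    simp only [h1]
  exact Nat.eq_of_mul_eq_mul_left (Nat.succ_pos _) h2

/-- Permutations of the labels preserving the block sizes. -/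
abbrev relabel (g : ∀ i, Equiv.Perm (Fin (a i))) : (Σ i, Fin (a i)) ≃ Σ i, Fin (a i) :=
  Equiv.sigmaCongrRight g

lemma comp_relabel (hp : IsLabelling a p) (g : ∀ i, Equiv.Perm (Fin (a i))) :
    IsLabelling a (relabel g ∘ p) := by
  intro l
  have h := hp ((relabel g).symm l)
  simp only [Equiv.eq_symm_apply] at h
  exact h

lemma exists_relabel (hp : IsLabelling a p) (hq : IsLabelling a q)
    (h : Setoid.ker p = Setoid.ker q) : ∃ g, q = relabel g ∘ p := by
  have h1 : ∀ x y, p y = p x ↔ q y = q x := fun x y => by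
    rw [← Setoid.ker_def, ← Setoid.ker_def, h]
  have h2 : ∀ i (m : Fin (a i)), ∃ m', ∀ x, p x = ⟨i, m⟩ → q x = ⟨i, m'⟩ := by
    intro i m
    obtain ⟨x, hx⟩ := hp.exists_eq ⟨i, m⟩
    have h3 : (q x).1 = i := by
      rw [← hq.card_fiber_eq_iff]
      simp only [← h1]
      rw [hp.card_fiber_eq_iff, hx]
    subst h3
    exact ⟨(q x).2, fun y hy => (h1 x y).1 (hy.trans hx.symm)⟩
  choose g hg using h2
  have hinj : ∀ i, Function.Injective (g i) := by
    intro i m m' hm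
    obtain ⟨x, hx⟩ := hp.exists_eq ⟨i, m⟩
    obtain ⟨y, hy⟩ := hp.exists_eq ⟨i, m'⟩
    have h3 : q x = q y := by rw [hg i m x hx, hg i m' y hy, hm]
    have h4 := (h1 y x).2 h3
    rw [hx, hy] at h4
    simpa using h4
  exact ⟨fun i => Equiv.ofBijective (g i) (Finite.injective_iff_bijective.1 (hinj i)),
    funext fun x => hg _ _ x rfl⟩

lemma relabel_injective (hp : IsLabelling a p) {g g' : ∀ i, Equiv.Perm (Fin (a i))}
    (h : relabel g ∘ p = relabel g' ∘ p) : g = g' := by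
  ext i m
  obtain ⟨x, hx⟩ := hp.exists_eq ⟨i, m⟩
  have := congrFun h x
  simp only [Function.comp_apply, hx, Equiv.sigmaCongrRight_apply] at this
  simpa [Fin.ext_iff] using this

end IsLabelling

open IsLabelling

/-- The set partition `π` has `a i` blocks of size `i + 1`, for each `i`. -/
def HasType (π : Setoid (Fin k)) (a : Fin k → ℕ) : Prop :=
  ∃ p, IsLabelling a p ∧ Setoid.ker p = π

open Classical in
lemma exists_hasType (π : Setoid (Fin k)) : ∃ a, HasType π a := by
  have hidx : ∀ c : Quotient π, ∃ i : Fin k, (Finset.univ.filter fun x => ⟦x⟧ = c).card = i + 1 := by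
    intro c
    obtain ⟨x, rfl⟩ := Quotient.exists_rep c
    have h1 : 0 < (Finset.univ.filter fun y => (⟦y⟧ : Quotient π) = ⟦x⟧).card :=
      Finset.card_pos.2 ⟨x, by simp⟩
    have h2 := Finset.card_le_univ (Finset.univ.filter fun y => (⟦y⟧ : Quotient π) = ⟦x⟧)
    rw [Fintype.card_fin] at h2
    exact ⟨⟨(Finset.univ.filter fun y => (⟦y⟧ : Quotient π) = ⟦x⟧).card - 1, by omega⟩, by
      simp only
      omega⟩
  choose idx hidx using hidx
  have : Fintype (Quotient π) := Fintype.ofFinite _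
  let f : Quotient π ≃ Σ i, Fin (Fintype.card {c // idx c = i}) :=
    (Equiv.sigmaFiberEquiv idx).symm.trans
      (Equiv.sigmaCongrRight fun i => Fintype.equivFin {c // idx c = i})
  have hf : ∀ c, (f c).1 = idx c := fun c => rfl
  refine ⟨_, fun x => f ⟦x⟧, fun l => ?_, ?_⟩
  · obtain ⟨c, rfl⟩ := f.surjective l
    rw [hf, ← hidx]
    simp only [f.injective.eq_iff]
  · ext x y
    rw [Setoid.ker_def, f.injective.eq_iff, Quotient.eq]

lemma exists_hasType_of_sum_eq (h : ∑ i : Fin k, ((i : ℕ) + 1) * a i = k) :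
    ∃ π : Setoid (Fin k), HasType π a := by
  have hcard : Fintype.card (Fin k) = Fintype.card (Σ l : Σ i, Fin (a i), Fin (l.1 + 1)) := by
    rw [Fintype.card_fin, Fintype.card_sigma, Fintype.sum_sigma]
    conv_lhs => rw [← h]
    simp [mul_comm]
  let e := Fintype.equivOfCardEq hcard
  refine ⟨_, fun x => (e x).1, fun l => ?_, rfl⟩
  conv_rhs => rw [← Fintype.card_fin (l.1 + 1), ← Finset.card_univ]
  symm
  refine Finset.card_bij (fun m _ => e.symm ⟨l, m⟩) (by simp) (by simp) ?_
  intro x hx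
  simp only [Finset.mem_filter, Finset.mem_univ, true_and] at hx
  subst hx
  exact ⟨(e x).2, by simp, by simp⟩

lemma IsLabelling.card_parts {p : Fin k → Σ i, Fin (a i)} (hp : IsLabelling a p)
    {P : Finpartition (Finset.univ : Finset (Fin k))} (h : Setoid.ker p = Setoid.ker P.part)
    (i : Fin k) : (P.parts.filter fun b => b.card = (i : ℕ) + 1).card = a i := by
  have h1 : ∀ x, P.part x = Finset.univ.filter fun y => p y = p x := by
    intro x
    ext y
    rw [P.mem_part_iff_part_eq_part (Finset.mem_univ _) (Finset.mem_univ _),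
      ← Setoid.ker_def (f := P.part), ← h]
    simp
  refine Nat.eq_of_mul_eq_mul_left (Nat.succ_pos i) ?_
  rw [Nat.succ_eq_add_one, ← hp.card_fst_eq, Finset.card_eq_sum_card_fiberwise (f := P.part)
    (t := P.parts.filter fun b => b.card = (i : ℕ) + 1)]
  · rw [Finset.sum_congr rfl (g := fun _ => (i : ℕ) + 1), Finset.sum_const, smul_eq_mul, mul_comm]
    intro b hb
    rw [Finset.mem_filter] at hb
    rw [← hb.2]
    congr 1
    ext x
    simp only [Finset.mem_filter, Finset.mem_univ, true_and]
    rw [P.part_eq_iff_mem hb.1, and_iff_right_iff_imp]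
    intro hx
    rw [← hp.card_fiber_eq_iff, ← h1, (P.part_eq_iff_mem hb.1).2 hx, hb.2]
  · intro x hx
    simp only [Finset.coe_filter, Finset.mem_univ, true_and, Set.mem_ofPred_eq] at hx ⊢
    refine ⟨P.part_mem.2 (Finset.mem_univ x), ?_⟩
    rwa [h1, hp.card_fiber_eq_iff]

open Classical in
lemma card_hasType (a : Fin k → ℕ) : Nat.card {π : Setoid (Fin k) // HasType π a} =
    Nat.card {P : Finpartition (Finset.univ : Finset (Fin k)) //
      ∀ i : Fin k, (P.parts.filter fun b => b.card = (i : ℕ) + 1).card = a i} := by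
  have hmem : ∀ (P : Finpartition (Finset.univ : Finset (Fin k))) x y,
      Setoid.ker P.part x y ↔ x ∈ P.part y := fun P x y => by
    rw [P.mem_part_iff_part_eq_part (Finset.mem_univ _) (Finset.mem_univ _), Setoid.ker_def]
  symm
  refine Nat.card_congr ((Equiv.ofBijective
    (fun P : Finpartition (Finset.univ : Finset (Fin k)) => Setoid.ker P.part)
    ⟨?_, ?_⟩).subtypeEquiv ?_)
  · intro P P' h
    have h1 : ∀ x, P.part x = P'.part x := by
      intro x
      ext y
      rw [← hmem, ← hmem]
      exact iff_of_eq (congrArg (fun s : Setoid (Fin k) => s y x) h)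
    ext b
    have h2 : ∀ Q : Finpartition (Finset.univ : Finset (Fin k)), b ∈ Q.parts ↔ ∃ x, Q.part x = b := by
      intro Q
      constructor
      · intro hb
        obtain ⟨x, hx⟩ := Q.nonempty_of_mem_parts hb
        exact ⟨x, Q.part_eq_of_mem hb hx⟩
      · rintro ⟨x, rfl⟩
        exact Q.part_mem.2 (Finset.mem_univ x)
    simp only [h2, h1]
  · intro π
    refine ⟨Finpartition.ofSetoid π, ?_⟩
    ext x y
    rw [hmem, Finpartition.mem_part_ofSetoid_iff_rel]
    exact ⟨π.symm', π.symm'⟩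
  · intro P
    constructor
    · intro hP
      obtain ⟨b, p, hp, h⟩ := exists_hasType (Setoid.ker P.part)
      have : a = b := funext fun i => (hP i).symm.trans (hp.card_parts h i)
      subst this
      exact ⟨p, hp, h⟩
    · rintro ⟨p, hp, h⟩
      exact hp.card_parts h

end Labelling
section Action

variable {k : ℕ} {L : Type*} {d d' : Setoid (Fin k ⊕ Fin k)} {p q r : Fin k → L}

/-- Stacking the diagram `d` on the labelling `p` of its bottom row gives the labelling `q` of its
top row. -/
def Acts (d : Setoid (Fin k ⊕ Fin k)) (q p : Fin k → L) : Prop :=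
  d ≤ Setoid.ker (Sum.elim q p)

lemma acts_ubpOne : Acts (ubpOne k) q p ↔ q = p := by
  constructor
  · intro h
    ext x
    exact h (x := .inl x) (y := .inr x) rfl
  · rintro rfl (x | x) (y | y) h
    all_goals exact congrArg q h

lemma Acts.comp (h : Acts d q p) {L' : Type*} (f : L → L') : Acts d (f ∘ q) (f ∘ p) := by
  rintro (x | x) (y | y) hxy
  all_goals exact congrArg f (h hxy)

namespace IsUniform

lemma exists_bot (hd : IsUniform k d) (x : Fin k) : ∃ y, d (.inl x) (.inr y) := by
  have h1 : 0 < {a : Fin k | d.r (.inl a) (.inl x)}.ncard :=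
    (Set.ncard_pos (Set.toFinite _)).2 ⟨x, d.refl' _⟩
  rw [hd, Set.ncard_pos (Set.toFinite _)] at h1
  obtain ⟨y, hy⟩ := h1
  exact ⟨y, d.symm' hy⟩

lemma acts_unique (hd : IsUniform k d) (h : Acts d q p) (h' : Acts d r p) : q = r := by
  ext x
  obtain ⟨y, hy⟩ := hd.exists_bot x
  exact (h hy).trans (h' hy).symm

lemma card_fiber_eq [DecidableEq L] (hd : IsUniform k d) (h : Acts d q p) (l : L) :
    (Finset.univ.filter fun x => q x = l).card = (Finset.univ.filter fun x => p x = l).card := by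
  classical
  have : Fintype (Quotient d) := Fintype.ofFinite _
  rw [Finset.card_eq_sum_card_fiberwise (f := fun x => (⟦.inl x⟧ : Quotient d)) (t := Finset.univ)
    (by simp), Finset.card_eq_sum_card_fiberwise (f := fun x => (⟦.inr x⟧ : Quotient d))
    (t := Finset.univ) (by simp)]
  refine Finset.sum_congr rfl fun c _ => ?_
  obtain ⟨z, rfl⟩ := Quotient.exists_rep c
  have hl : ∀ x, d (.inl x) z → q x = Sum.elim q p z := fun x hx => h hx
  have hr : ∀ x, d (.inr x) z → p x = Sum.elim q p z := fun x hx => h hx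
  simp only [Finset.filter_filter, Quotient.eq]
  by_cases hz : Sum.elim q p z = l
  · have := hd z
    rw [Set.ncard_eq_toFinset_card', Set.ncard_eq_toFinset_card'] at this
    convert this using 2
    · ext x
      simp only [Finset.mem_filter, Finset.mem_univ, true_and, Set.mem_toFinset]
      exact and_iff_right_of_imp fun hx => (hl x hx).trans hz
    · ext x
      simp only [Finset.mem_filter, Finset.mem_univ, true_and, Set.mem_toFinset]
      exact and_iff_right_of_imp fun hx => (hr x hx).trans hz
  · rw [Finset.filter_false_of_mem, Finset.filter_false_of_mem]
    · rintro x - ⟨h1, h2⟩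
      exact hz ((hr x h2).symm.trans h1)
    · rintro x - ⟨h1, h2⟩
      exact hz ((hl x h2).symm.trans h1)

lemma acts_mul (hd' : IsUniform k d') :
    Acts (ubpMul d d') q p ↔ ∃ r, Acts d q r ∧ Acts d' r p := by
  have hle1 : ∀ {x y}, d x y → (liftSetoid k (row12 k) d ⊔ liftSetoid k (row23 k) d')
      (row12 k x) (row12 k y) := fun {x y} h =>
    (le_sup_left : _ ≤ liftSetoid k (row12 k) d ⊔ liftSetoid k (row23 k) d')
      (Relation.EqvGen.rel _ _ ⟨x, y, h, rfl, rfl⟩)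
  have hle2 : ∀ {x y}, d' x y → (liftSetoid k (row12 k) d ⊔ liftSetoid k (row23 k) d')
      (row23 k x) (row23 k y) := fun {x y} h =>
    (le_sup_right : _ ≤ liftSetoid k (row12 k) d ⊔ liftSetoid k (row23 k) d')
      (Relation.EqvGen.rel _ _ ⟨x, y, h, rfl, rfl⟩)
  set J := liftSetoid k (row12 k) d ⊔ liftSetoid k (row23 k) d' with hJ
  constructor
  · intro h
    choose z hz using hd'.exists_bot
    let out : Fin k ⊕ (Fin k ⊕ Fin k) → Fin k ⊕ Fin k :=
      Sum.elim Sum.inl (Sum.elim (fun y => .inr (z y)) Sum.inr)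
    have hout : ∀ u, J u (row13 k (out u)) := by
      rintro (x | y | y)
      · exact J.refl' _
      · exact hle2 (hz y)
      · exact J.refl' _
    have key : ∀ u v, J u v → Sum.elim q p (out u) = Sum.elim q p (out v) := by
      intro u v huv
      exact h (J.trans' (J.symm' (hout u)) (J.trans' huv (hout v)))
    refine ⟨p ∘ z, ?_, ?_⟩
    · rintro (x | x) (y | y) hxy
      all_goals exact key _ _ (hle1 hxy)
    · rintro (x | x) (y | y) hxy
      all_goals exact key _ _ (hle2 hxy)
  · rintro ⟨r, h1, h2⟩
    have key : J ≤ Setoid.ker (Sum.elim q (Sum.elim r p)) := by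
      rw [hJ]
      refine sup_le (Setoid.eqvGen_le ?_) (Setoid.eqvGen_le ?_)
      · rintro _ _ ⟨x, y, hxy, rfl, rfl⟩
        have := h1 hxy
        rcases x with x | x <;> rcases y with y | y <;> exact this
      · rintro _ _ ⟨x, y, hxy, rfl, rfl⟩
        have := h2 hxy
        rcases x with x | x <;> rcases y with y | y <;> exact this
    rintro x y hxy
    have := key hxy
    rcases x with x | x <;> rcases y with y | y <;> exact this

end IsUniform

variable {a b : Fin k → ℕ}

open IsLabelling

lemma IsLabelling.isUniform_ker {q p : Fin k → Σ i, Fin (a i)} (hq : IsLabelling a q)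
    (hp : IsLabelling a p) : IsUniform k (Setoid.ker (Sum.elim q p)) := by
  classical
  intro x
  have h1 := hq (Sum.elim q p x)
  rw [← hp (Sum.elim q p x)] at h1
  rw [Set.ncard_eq_toFinset_card', Set.ncard_eq_toFinset_card']
  convert h1 using 2
  · ext y
    simp
  · ext y
    simp

/-- A labelling of the blocks of a set partition of type `a`. -/
noncomputable def label (π : {π : Setoid (Fin k) // HasType π a}) : Fin k → Σ i, Fin (a i) :=
  π.2.choose

lemma isLabelling_label (π : {π : Setoid (Fin k) // HasType π a}) : IsLabelling a (label π) :=
  π.2.choose_spec.1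

lemma ker_label (π : {π : Setoid (Fin k) // HasType π a}) : Setoid.ker (label π) = π :=
  π.2.choose_spec.2

lemma ker_relabel_comp {p : Fin k → Σ i, Fin (a i)} (g : ∀ i, Equiv.Perm (Fin (a i))) :
    Setoid.ker (relabel g ∘ p) = Setoid.ker p := by
  ext x y
  rw [Setoid.ker_def, Setoid.ker_def, Function.comp_apply, Function.comp_apply,
    (relabel g).injective.eq_iff]

lemma relabel_comp_label_inj {g h : ∀ i, Equiv.Perm (Fin (a i))}
    {π π' : {π : Setoid (Fin k) // HasType π a}}
    (heq : relabel g ∘ label π = relabel h ∘ label π') : π = π' ∧ g = h := by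
  have h1 : π = π' := by
    apply Subtype.ext
    exact (ker_label π).symm.trans ((ker_relabel_comp g).symm.trans ((congrArg Setoid.ker heq).trans
      ((ker_relabel_comp h).trans (ker_label π'))))
  subst h1
  exact ⟨rfl, (isLabelling_label π).relabel_injective heq⟩

lemma IsLabelling.exists_relabel_comp_label {p : Fin k → Σ i, Fin (a i)} (hp : IsLabelling a p) :
    ∃ (g : ∀ i, Equiv.Perm (Fin (a i))) (π : {π : Setoid (Fin k) // HasType π a}),
      p = relabel g ∘ label π := by
  obtain ⟨g, hg⟩ := (isLabelling_label ⟨Setoid.ker p, p, hp, rfl⟩).exists_relabel hp (ker_label _)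
  exact ⟨g, _, hg⟩

lemma relabel_mul (g h : ∀ i, Equiv.Perm (Fin (a i))) :
    (relabel (g * h) : (Σ i, Fin (a i)) → Σ i, Fin (a i)) = relabel g ∘ relabel h := rfl

/-- The diagram with the given block bijection. -/
noncomputable def diagram (π' : {π : Setoid (Fin k) // HasType π a}) (g : ∀ i, Equiv.Perm (Fin (a i)))
    (π : {π : Setoid (Fin k) // HasType π a}) : UBPel k :=
  ⟨Setoid.ker (Sum.elim (relabel g⁻¹ ∘ label π') (label π)),
    ((isLabelling_label π').comp_relabel _).isUniform_ker (isLabelling_label π)⟩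

/-- `Connects d π' g π` says that `d` is coarsened by the diagram with block bijection `g`. -/
def Connects (d : UBPel k) (π' : {π : Setoid (Fin k) // HasType π a})
    (g : ∀ i, Equiv.Perm (Fin (a i))) (π : {π : Setoid (Fin k) // HasType π a}) : Prop :=
  Acts d.1 (relabel g⁻¹ ∘ label π') (label π)

lemma isMonomial_connects [Monoid (UBPel k)]
    (hmul : ∀ a b : UBPel k, (a * b).1 = ubpMul a.1 b.1) (hone : (1 : UBPel k).1 = ubpOne k)
    (a : Fin k → ℕ) : IsMonomial (Connects (k := k) (a := a)) where
  unique {d p q g q' g'} h h' := by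
    obtain ⟨h1, h2⟩ := relabel_comp_label_inj (d.2.acts_unique h h')
    exact ⟨h1, inv_injective h2⟩
  one {p q g} := by
    rw [Connects, hone, acts_ubpOne]
    constructor
    · intro h
      obtain ⟨h1, h2⟩ := relabel_comp_label_inj (h := 1) h
      exact ⟨h1, by simpa using h2⟩
    · rintro ⟨rfl, rfl⟩
      rfl
  mul {d d' p q g} := by
    rw [Connects, hmul, d'.2.acts_mul]
    constructor
    · rintro ⟨r, h1, h2⟩
      have hr : IsLabelling a r := fun l => by
        rw [d'.2.card_fiber_eq h2]
        exact isLabelling_label p l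
      obtain ⟨h', π, rfl⟩ := hr.exists_relabel_comp_label
      refine ⟨π, g * h', h'⁻¹, ?_, by rwa [Connects, inv_inv], by group⟩
      have := h1.comp (relabel h'⁻¹)
      rw [← Function.comp_assoc, ← Function.comp_assoc, ← relabel_mul, ← relabel_mul,
        inv_mul_cancel] at this
      rw [Connects, mul_inv_rev]
      exact this
    · rintro ⟨π, h, h', h1, h2, rfl⟩
      refine ⟨relabel h'⁻¹ ∘ label π, ?_, h2⟩
      rw [mul_inv_rev, relabel_mul, Function.comp_assoc]
      exact h1.comp _

end Action
lemma top_le_span_indicator_le (K : Type*) {M : Type*} [Field K] [PartialOrder M] [Finite M]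
    [DecidableLE M] : ⊤ ≤ Submodule.span K
      (Set.range fun (e : M) (d : M) => if d ≤ e then (1 : K) else 0) := by
  classical
  have : Fintype M := Fintype.ofFinite M
  set N := Submodule.span K (Set.range fun (e : M) (d : M) => if d ≤ e then (1 : K) else 0)
  have key : ∀ e : M, Pi.single e (1 : K) ∈ N := by
    intro e
    induction e using WellFoundedLT.induction with
    | ind e ih =>
      have h : Pi.single e (1 : K) = (fun d => if d ≤ e then (1 : K) else 0) -
          ∑ d ∈ Finset.univ.filter (· < e), Pi.single d (1 : K) := by
        ext c
        simp only [Pi.sub_apply, Finset.sum_apply, Pi.single_apply, Finset.sum_ite_eq,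
          Finset.mem_filter, Finset.mem_univ, true_and]
        by_cases hc : c = e
        · simp [hc]
        · simp [hc, lt_iff_le_and_ne]
      rw [h]
      exact N.sub_mem (Submodule.subset_span ⟨e, rfl⟩)
        (N.sum_mem fun d hd => ih d (Finset.mem_filter.1 hd).2)
  rw [← (Pi.basisFun K M).span_eq, Submodule.span_le]
  rintro _ ⟨e, rfl⟩
  rw [Pi.basisFun_apply]
  exact key e

section Classification

variable {k : ℕ}

lemma exists_diagram (d : UBPel k) : ∃ (a : Fin k → ℕ) (π' : {π : Setoid (Fin k) // HasType π a})
    (g : ∀ i, Equiv.Perm (Fin (a i))) (π : {π : Setoid (Fin k) // HasType π a}),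
    diagram π' g π = d := by
  obtain ⟨a, ha⟩ := exists_hasType (botPart d.1)
  let π : {π : Setoid (Fin k) // HasType π a} := ⟨_, ha⟩
  have hπ : ∀ x y, label π x = label π y ↔ d.1 (.inr x) (.inr y) := fun x y => by
    rw [← Setoid.ker_def, ker_label]
    exact Iff.rfl
  choose z hz using d.2.exists_bot
  have hker : Setoid.ker (Sum.elim (label π ∘ z) (label π)) = d.1 := by
    have hout : ∀ x, d.1 x (.inr (Sum.elim z id x)) := by
      rintro (x | x)
      · exact hz x
      · exact d.1.refl' _
    have hlab : ∀ x, Sum.elim (label π ∘ z) (label π) x = label π (Sum.elim z id x) := by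
      rintro (x | x) <;> rfl
    ext x y
    rw [Setoid.ker_def, hlab, hlab, hπ]
    exact ⟨fun h => d.1.trans' (hout x) (d.1.trans' h (d.1.symm' (hout y))),
      fun h => d.1.trans' (d.1.symm' (hout x)) (d.1.trans' h (hout y))⟩
  have hq : IsLabelling a (label π ∘ z) := fun l => by
    rw [d.2.card_fiber_eq hker.ge]
    exact isLabelling_label π l
  obtain ⟨g, π', hg⟩ := hq.exists_relabel_comp_label
  refine ⟨a, π', g⁻¹, π, Subtype.ext ?_⟩
  rw [← hker, hg]
  simp [diagram]

lemma diagram_injective : Function.Injective fun x : Σ a : Fin k → ℕ,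
    {π : Setoid (Fin k) // HasType π a} × (∀ i, Equiv.Perm (Fin (a i))) ×
      {π : Setoid (Fin k) // HasType π a} => diagram x.2.1 x.2.2.1 x.2.2.2 := by
  rintro ⟨a, p', g, p⟩ ⟨b, q', h, q⟩ heq
  have heq : diagram p' g p = diagram q' h q := heq
  have hbot : p.1 = q.1 := by
    rw [← ker_label p, ← ker_label q]
    exact congrArg (fun d : UBPel k => botPart d.1) heq
  have hab : a = b := (isLabelling_label p).type_eq (isLabelling_label q)
    ((ker_label p).trans (hbot.trans (ker_label q).symm))
  subst hab
  obtain rfl : p = q := Subtype.ext hbot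
  have hle : Connects (diagram q' h p) p' g p := by
    rw [← heq]
    exact le_rfl
  obtain ⟨rfl, h2⟩ := relabel_comp_label_inj ((diagram q' h p).2.acts_unique hle le_rfl)
  rw [inv_inj.1 h2]

lemma diagram_bijective : Function.Bijective
    fun x : Σ a : {a : Fin k → ℕ // ∑ i : Fin k, ((i : ℕ) + 1) * a i = k},
      {π : Setoid (Fin k) // HasType π a.1} × (∀ i, Equiv.Perm (Fin (a.1 i))) ×
        {π : Setoid (Fin k) // HasType π a.1} => diagram x.2.1 x.2.2.1 x.2.2.2 := by
  constructor
  · rintro ⟨⟨a, ha⟩, x⟩ ⟨⟨b, hb⟩, y⟩ h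
    obtain ⟨rfl, h⟩ := Sigma.mk.inj_iff.1 (diagram_injective (a₁ := ⟨a, x⟩) (a₂ := ⟨b, y⟩) h)
    rw [eq_of_heq h]
  · intro d
    obtain ⟨a, π', g, π, h⟩ := exists_diagram d
    exact ⟨⟨⟨a, (isLabelling_label π).sum_eq⟩, π', g, π⟩, h⟩

lemma finite_setoid (X : Type*) [Finite X] : Finite (Setoid X) :=
  Finite.of_injective (β := X → X → Prop) (fun s => s.r) fun _ _ h =>
    Setoid.ext fun a b => iff_of_eq (congrFun (congrFun h a) b)

instance finite_hasType (a : Fin k → ℕ) : Finite {π : Setoid (Fin k) // HasType π a} :=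
  have := finite_setoid (Fin k)
  inferInstance

instance finite_ubpel : Finite (UBPel k) :=
  have := finite_setoid (Fin k ⊕ Fin k)
  inferInstanceAs (Finite {d : Setoid (Fin k ⊕ Fin k) // IsUniform k d})

instance finite_type : Finite {a : Fin k → ℕ // ∑ i : Fin k, ((i : ℕ) + 1) * a i = k} := by
  refine Finite.of_injective (β := Fin k → Fin (k + 1)) (fun a i => ⟨a.1 i, ?_⟩) ?_
  · have h1 := Finset.single_le_sum (f := fun i : Fin k => ((i : ℕ) + 1) * a.1 i)
      (fun _ _ => Nat.zero_le _) (Finset.mem_univ i)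
    have h2 : a.1 i ≤ ((i : ℕ) + 1) * a.1 i := Nat.le_mul_of_pos_left _ (Nat.succ_pos _)
    have h3 := a.2
    exact Nat.lt_succ_of_le (h2.trans (h1.trans h3.le))
  · intro a b h
    ext i
    exact congrArg (fun f => (f i : ℕ)) h

open Classical in
lemma top_le_span_connects : ⊤ ≤ Submodule.span ℂ
    (Set.range fun (x : Σ a : {a : Fin k → ℕ // ∑ i : Fin k, ((i : ℕ) + 1) * a i = k},
      {π : Setoid (Fin k) // HasType π a.1} × (∀ i, Equiv.Perm (Fin (a.1 i))) ×
        {π : Setoid (Fin k) // HasType π a.1}) (d : UBPel k) =>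
      if Connects d x.2.1 x.2.2.1 x.2.2.2 then (1 : ℂ) else 0) := by
  have : Finite {d : Setoid (Fin k ⊕ Fin k) // IsUniform k d} := finite_ubpel
  refine (top_le_span_indicator_le ℂ
    (M := {d : Setoid (Fin k ⊕ Fin k) // IsUniform k d})).trans (Submodule.span_mono ?_)
  rintro _ ⟨e, rfl⟩
  obtain ⟨x, rfl⟩ := diagram_bijective.2 e
  exact ⟨x, rfl⟩

lemma card_ubpel
    [Fintype {a : Fin k → ℕ // ∑ i : Fin k, ((i : ℕ) + 1) * a i = k}] :
    Nat.card (UBPel k) = ∑ a : {a : Fin k → ℕ // ∑ i : Fin k, ((i : ℕ) + 1) * a i = k},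
      Nat.card {π : Setoid (Fin k) // HasType π a.1} ^ 2 * ∏ i, (a.1 i).factorial := by
  rw [← Nat.card_congr (Equiv.ofBijective _ diagram_bijective), Nat.card_sigma]
  refine Finset.sum_congr rfl fun a _ => ?_
  rw [Nat.card_prod, Nat.card_prod, Nat.card_pi]
  simp_rw [Nat.card_perm, Nat.card_fin]
  ring

end Classification

/-- For a monoid structure on `U_k` given by the diagram product,
there is a complete, irredundant family of irreducible representations of `U_k`
(simple modules over the monoid algebra `ℂ[U_k]`) indexed by `I_k`, and the
dimension of the irreducible indexed by `λ⃗` is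
`sp_k(λ) · f^{λ^{(1)}} ⋯ f^{λ^{(k)}}`. -/
theorem ubp_irreducible_dimension (k : ℕ) [M : Monoid (UBPel k)]
    (hmul : ∀ a b : UBPel k, (a * b).1 = ubpMul a.1 b.1)
    (hone : (1 : UBPel k).1 = ubpOne k) :
    ∃ W : UBPIndex k →
        Submodule (MonoidAlgebra ℂ (UBPel k)) (MonoidAlgebra ℂ (UBPel k)),
      (∀ v, IsSimpleModule (MonoidAlgebra ℂ (UBPel k)) ↥(W v)) ∧
      (∀ v w, Nonempty (↥(W v) ≃ₗ[MonoidAlgebra ℂ (UBPel k)] ↥(W w)) → v = w) ∧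
      (∀ S : Submodule (MonoidAlgebra ℂ (UBPel k)) (MonoidAlgebra ℂ (UBPel k)),
        IsSimpleModule (MonoidAlgebra ℂ (UBPel k)) ↥S →
        ∃ v, Nonempty (↥S ≃ₗ[MonoidAlgebra ℂ (UBPel k)] ↥(W v))) ∧
      ∀ v, Module.finrank ℂ ↥(Submodule.restrictScalars ℂ (W v)) =
        spCount k v * ∏ i : Fin k, sytCount (v.1 i) := by
  classical
  choose hpos ρ hρ using exists_coeffsSpan_perm
  let T := {a : Fin k → ℕ // ∑ i : Fin k, ((i : ℕ) + 1) * a i = k}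
  let P : T → Type := fun a => {π : Setoid (Fin k) // HasType π a.1}
  let J : T → Type := fun a => ∀ i, {μ : YoungDiagram // μ.card = a.1 i}
  let t : ∀ a, J a → Type := fun a w => ∀ i, Fin (sytCount (w i).1)
  let n : (Σ a, J a) → Type := fun x => P x.1 × t x.1 x.2
  let _ : Fintype T := Fintype.ofFinite T
  let _ : ∀ a, Fintype (P a) := fun a => Fintype.ofFinite (P a)
  let _ : ∀ a, DecidableEq (P a) := fun _ p q => Classical.propDecidable (p = q)
  let _ : ∀ m, Fintype {μ : YoungDiagram // μ.card = m} := fun m => Fintype.ofFinite _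
  let _ : ∀ a, Fintype (J a) := fun a =>
    inferInstanceAs (Fintype (∀ i, {μ : YoungDiagram // μ.card = a.1 i}))
  let _ : ∀ a w, Fintype (t a w) := fun a w =>
    inferInstanceAs (Fintype (∀ i, Fin (sytCount (w i).1)))
  let _ : ∀ x, Fintype (n x) := fun x => inferInstanceAs (Fintype (P x.1 × t x.1 x.2))
  let σ : ∀ a (w : J a), (∀ i, Equiv.Perm (Fin (a.1 i))) →* Matrix (t a w) (t a w) ℂ :=
    fun a w => piRep fun i => ρ (a.1 i) (w i)
  have hσ : ∀ a, CoeffsSpan ℂ (σ a) := fun a =>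
    coeffsSpan_piRep (ρ := fun i => ρ (a.1 i)) fun i => hρ (a.1 i)
  have hspan := coeffsSpan_monomialRep (fun a : T => isMonomial_connects hmul hone a.1)
    top_le_span_connects hσ
  have hcard_n : ∀ x : Σ a, J a, Fintype.card (n x) =
      Nat.card (P x.1) * ∏ i, sytCount (x.2 i).1 := by
    intro x
    rw [Fintype.card_prod, ← Nat.card_eq_fintype_card, Fintype.card_pi]
    simp
  have hcard : ∑ x, Fintype.card (n x) ^ 2 = Nat.card (UBPel k) := by
    rw [card_ubpel, Fintype.sum_sigma]
    refine Finset.sum_congr rfl fun a _ => ?_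
    simp_rw [hcard_n, mul_pow, ← Finset.mul_sum, ← Finset.prod_pow]
    congr 1
    rw [Finset.prod_congr rfl fun i _ => (sum_card_sytCount_sq (a.1 i)).symm,
      Finset.prod_univ_sum, Fintype.piFinset_univ]
  obtain ⟨Φ⟩ := exists_algEquiv_of_coeffsSpan (n := n) hspan hcard
  have hne : ∀ x, Nonempty (n x) := by
    rintro ⟨a, w⟩
    obtain ⟨π, hπ⟩ := exists_hasType_of_sum_eq a.2
    exact ⟨⟨π, hπ⟩, fun i => ⟨0, hpos _ _ (w i).2⟩⟩
  let j : ∀ x, n x := fun x => (hne x).some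
  let idx : UBPIndex k → Σ a, J a := fun v => ⟨⟨fun i => (v.1 i).card, v.2⟩, fun i => ⟨v.1 i, rfl⟩⟩
  refine ⟨fun v => columnIdeal Φ (idx v) (j (idx v)), fun v => isSimpleModule_columnIdeal Φ _ _,
    ?_, ?_, ?_⟩
  · rintro v w ⟨e⟩
    have h := eq_of_columnIdeal_equiv Φ e
    exact Subtype.ext (congrArg (fun (x : Σ a, J a) i => (x.2 i).1) h)
  · intro S hS
    obtain ⟨⟨⟨a, ha⟩, w⟩, hw⟩ := exists_columnIdeal_equiv Φ j (S := S)
    obtain ⟨v, hv, rfl⟩ : ∃ (v : Fin k → YoungDiagram) (hv : ∀ i, (v i).card = a i),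
        w = fun i => ⟨v i, hv i⟩ := ⟨fun i => (w i).1, fun i => (w i).2, rfl⟩
    obtain rfl : (fun i => (v i).card) = a := funext hv
    exact ⟨⟨v, ha⟩, hw⟩
  · intro v
    rw [finrank_columnIdeal, hcard_n, card_hasType]
    rfl
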